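/- arXiv:1608.05861 — 12 statements merged into one kernel-verified Lean document; each statement's English description precedes it below -/
import Mathlib

section
/- Let K be a field of characteristic different from 2 and 3, and let L be a (possibly non-associative, non-unital) K-algebra whose multiplication ∘ is commutative. Then L satisfies the Jacobi identity (x∘y)∘z + (z∘x)∘y + (y∘z)∘x = 0 for all x, y, z ∈ L if and only if (x∘x)∘x = 0 for all x ∈ L. -/
/-!
Setting `x = y = z` in the Jacobi identity gives three times the cube of `x`. Conversely, the
Jacobi sum is symmetric by commutativity, and twice it is the full polarization of the cubic
map `x ↦ (x ∘ x) ∘ x`. Both factors are invertible in `K`.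
-/


/-- For a commutative (possibly non-associative, non-unital) algebra `L`
over a field `K` of characteristic `≠ 2, 3`, the Jacobi identity holds iff
`(x ∘ x) ∘ x = 0` for all `x`. -/
theorem jacobi_iff_cube_zero (K : Type*) [Field K]
    (h2 : (2 : K) ≠ 0) (h3 : (3 : K) ≠ 0)
    {L : Type*} [AddCommGroup L] [Module K L]
    (mul : L →ₗ[K] L →ₗ[K] L)
    (comm : ∀ x y : L, mul x y = mul y x) :
    (∀ x y z : L, mul (mul x y) z + mul (mul z x) y + mul (mul y z) x = 0) ↔
      (∀ x : L, mul (mul x x) x = 0) := by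
  constructor
  · intro h x
    have h' := h x x x
    have h3' : (3 : K) • mul (mul x x) x = 0 := by
      rw [← h']; module
    exact (smul_eq_zero.mp h3').resolve_left h3
  · intro h x y z
    have h2' : (2 : K) • (mul (mul x y) z + mul (mul z x) y + mul (mul y z) x) = 0 := by
      -- Inclusion–exclusion over the partial sums of `x, y, z` isolates the trilinear part.
      have key : (2 : K) • (mul (mul x y) z + mul (mul z x) y + mul (mul y z) x) =
          mul (mul (x + y + z) (x + y + z)) (x + y + z)
          - mul (mul (x + y) (x + y)) (x + y) - mul (mul (y + z) (y + z)) (y + z)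
          - mul (mul (x + z) (x + z)) (x + z)
          + mul (mul x x) x + mul (mul y y) y + mul (mul z z) z := by
        simp only [map_add, LinearMap.add_apply, comm y x, comm z y, comm x z]
        module
      rw [key]
      simp only [h, sub_zero, add_zero]
    exact (smul_eq_zero.mp h2').resolve_left h2
end

section
/- Every mock-Lie algebra L over a field K of characteristic different from 2 and 3 satisfies the Jordan identity: ((x∘x)∘y)∘x = (x∘x)∘(y∘x) for all x, y ∈ L. -/
/-- Every mock-Lie algebra over a field of characteristic `≠ 2, 3`
satisfies the Jordan identity `((x∘x)∘y)∘x = (x∘x)∘(y∘x)`. -/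
theorem mockLie_jordan_identity (K : Type*) [Field K]
    (h2 : (2 : K) ≠ 0) (h3 : (3 : K) ≠ 0)
    {L : Type*} [AddCommGroup L] [Module K L]
    (mul : L →ₗ[K] L →ₗ[K] L)
    (comm : ∀ x y : L, mul x y = mul y x)
    (jacobi : ∀ x y z : L, mul (mul x y) z + mul (mul z x) y + mul (mul y z) x = 0) :
    ∀ x y : L, mul (mul (mul x x) y) x = mul (mul x x) (mul y x) := by
  intro x y
  -- Jacobi at `(x, x, z)` says that multiplication by `x∘x` is `-2` times the square of
  -- multiplication by `x`, so both sides of the identity equal `-2 • ((y∘x)∘x)∘x`.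
  have key : ∀ z : L, mul (mul x x) z = (-2 : K) • mul (mul z x) x := by
    intro z
    have h := jacobi x x z
    rw [comm x z, add_assoc] at h
    rw [eq_neg_of_add_eq_zero_left h, neg_smul, two_smul]
  rw [key y, key (mul y x), map_smul, LinearMap.smul_apply]
end

section
/- Every mock-Lie algebra L over a field K of characteristic different from 2 and 3 satisfies the 3-Engel identity: ((x∘y)∘y)∘y = 0 for all x, y ∈ L. -/
/-!
Write `R` for multiplication by `y`. The Jacobi identity at `(y, y, y)` gives `y² ∘ y = 0`, and
at `(x, y, y)` it gives `2 R² x = -(y² ∘ x)`. Computing `2 R³ x` from the latter in two ways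
(at `x ∘ y`, and by applying `R`) yields `-(y² ∘ (x ∘ y))` and `-((y² ∘ x) ∘ y)`. By Jacobi
at `(y², x, y)` these two add up to `(y ∘ y²) ∘ x = 0`, so `4 R³ x = 0`.
-/

/-- Every mock-Lie algebra over a field of characteristic `≠ 2, 3`
satisfies the 3-Engel identity `((x∘y)∘y)∘y = 0`. -/
theorem mockLie_three_engel (K : Type*) [Field K]
    (h2 : (2 : K) ≠ 0) (h3 : (3 : K) ≠ 0)
    {L : Type*} [AddCommGroup L] [Module K L]
    (mul : L →ₗ[K] L →ₗ[K] L)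
    (comm : ∀ x y : L, mul x y = mul y x)
    (jacobi : ∀ x y z : L, mul (mul x y) z + mul (mul z x) y + mul (mul y z) x = 0) :
    ∀ x y : L, mul (mul (mul x y) y) y = 0 := by
  intro x y
  have hcube : mul (mul y y) y = 0 := by
    have h : (3 : K) • mul (mul y y) y = 0 := by
      rw [← jacobi y y y]
      module
    exact (smul_eq_zero.mp h).resolve_left h3
  have hsq : ∀ z : L, (2 : K) • mul (mul z y) y + mul (mul y y) z = 0 := by
    intro z
    have h := jacobi z y y
    rw [comm y z] at h
    rw [← h]
    module
  have hR : (2 : K) • mul (mul (mul x y) y) y + mul (mul (mul y y) x) y = 0 := by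
    have h := congrArg (fun w => mul w y) (hsq x)
    simpa using h
  have hanti : mul (mul (mul y y) x) y + mul (mul y y) (mul x y) = 0 := by
    have h := jacobi (mul y y) x y
    rw [comm y (mul y y), hcube, comm (mul x y) (mul y y)] at h
    simpa using h
  have h4 : (2 : K) • (2 : K) • mul (mul (mul x y) y) y = 0 := by
    linear_combination (norm := module) hR + hsq (mul x y) - hanti
  exact (smul_eq_zero.mp ((smul_eq_zero.mp h4).resolve_left h2)).resolve_left h2
end

section
/- Let A be an antiassociative algebra over a field K of characteristic different from 2 and 3. Then the algebra A^(+), defined on the same vector space with the multiplication a∘b = (1/2)(a b + b a), is a mock-Lie algebra: it is commutative and satisfies the Jacobi identity (x∘y)∘z + (z∘x)∘y + (y∘z)∘x = 0. -/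
variable (K : Type*) [Field K] {A : Type*} [AddCommGroup A] [Module K A]

/-- The "plus" multiplication `a ∘ b = (1/2)(ab + ba)` associated to a bilinear
multiplication on `A`. -/
def plusMul (mul : A →ₗ[K] A →ₗ[K] A) : A →ₗ[K] A →ₗ[K] A :=
  (1 / 2 : K) • (mul + mul.flip)

theorem plusMul_apply (mul : A →ₗ[K] A →ₗ[K] A) (x y : A) :
    plusMul K mul x y = (1 / 2 : K) • (mul x y + mul y x) := by
  simp [plusMul]

/-- If `A` is antiassociative over a field of characteristic `≠ 2, 3`,
then `A⁽⁺⁾` with `a ∘ b = (1/2)(ab + ba)` is a mock-Lie algebra: commutative and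
satisfying the Jacobi identity. -/
theorem antiassoc_plus_is_mockLie (h2 : (2 : K) ≠ 0) (h3 : (3 : K) ≠ 0)
    (mul : A →ₗ[K] A →ₗ[K] A)
    (anti : ∀ x y z : A, mul (mul x y) z = - mul x (mul y z)) :
    (∀ x y : A, plusMul K mul x y = plusMul K mul y x) ∧
      (∀ x y z : A,
        plusMul K mul (plusMul K mul x y) z + plusMul K mul (plusMul K mul z x) y +
          plusMul K mul (plusMul K mul y z) x = 0) := by
  refine ⟨fun x y => ?_, fun x y z => ?_⟩
  · rw [plusMul_apply, plusMul_apply, add_comm]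
  · -- The Jacobi sum is `1/4` times twelve triple products. With every product bracketed to the
    -- right, each of the six words in `x, y, z` occurs once with each sign.
    simp only [plusMul_apply, map_add, map_smul, LinearMap.add_apply, LinearMap.smul_apply, anti]
    module
end

section
/- Let L be a mock-Lie algebra over a field K of characteristic different from 2 and 3, let A be an antiassociative K-algebra, and suppose there exists an injective linear map φ: L → A with φ(x∘y) = (1/2)(φ(x)φ(y) + φ(y)φ(x)) for all x, y ∈ L (i.e., an embedding of L into A^(+)). Then L is nilpotent of index at most 4, i.e., L^4 = 0. -/
/-!
In an antiassociative algebra every product of four elements vanishes: moving the brackets once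
around the pentagon takes `(ab)(cd)` to `-(ab)(cd)`, because the pentagon has an odd number of
sides, each contributing a sign, and `2` is invertible. If `L` embeds into `A⁽⁺⁾`, then
`φ (((x ∘ y) ∘ z) ∘ w)` is a linear combination of products of four elements of `A`, so
`((x ∘ y) ∘ z) ∘ w = 0`. Such elements span `L⁴`.
-/

variable (K : Type*) [Field K] {L : Type*} [AddCommGroup L] [Module K L]

/-- For subspaces `V`, `W` of `L`, `V ∘ W` is the linear span of all products
`v ∘ w` with `v ∈ V`, `w ∈ W`. -/
def prodSpan (mul : L →ₗ[K] L →ₗ[K] L) (V W : Submodule K L) : Submodule K L :=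
  Submodule.span K {z : L | ∃ v ∈ V, ∃ w ∈ W, z = mul v w}

/-- The lower central series: `lc 1 = L`, `lc (m+1) = (lc m) ∘ L`.
(The value at `0` is junk, set to `⊤`.) -/
def lc (mul : L →ₗ[K] L →ₗ[K] L) : ℕ → Submodule K L
  | 0 => ⊤
  | 1 => ⊤
  | (m + 2) => prodSpan K mul (lc mul (m + 1)) ⊤

/-- It suffices to treat the bracketing `a(b(cd))`: the other four agree with it up to sign. -/
lemma antiassoc_mul_four_eq_zero (h2 : (2 : K) ≠ 0)
    {A : Type*} [AddCommGroup A] [Module K A] (mulA : A →ₗ[K] A →ₗ[K] A)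
    (anti : ∀ x y z : A, mulA (mulA x y) z = - mulA x (mulA y z)) (a b c d : A) :
    mulA a (mulA b (mulA c d)) = 0 := by
  have short : mulA (mulA (mulA a b) c) d = mulA a (mulA b (mulA c d)) := by
    rw [anti (mulA a b), anti a b, neg_neg]
  have long : mulA (mulA (mulA a b) c) d = - mulA a (mulA b (mulA c d)) := by
    rw [anti a b c, map_neg, LinearMap.neg_apply, anti a, anti b, map_neg]
    simp
  have h : (2 : K) • mulA a (mulA b (mulA c d)) = 0 := by
    rw [two_smul]
    nth_rewrite 1 [← short]
    rw [long, neg_add_cancel]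
  exact (smul_eq_zero.mp h).resolve_left h2

/-- If a mock-Lie algebra `L` (over a field of characteristic `≠ 2, 3`)
embeds into `A⁽⁺⁾` for an antiassociative algebra `A`, via an injective linear map
`φ` with `φ(x∘y) = (1/2)(φ(x)φ(y) + φ(y)φ(x))`, then `L⁴ = 0`. -/
theorem embeds_in_antiassoc_plus_implies_nilpotent_four
    (h2 : (2 : K) ≠ 0) (h3 : (3 : K) ≠ 0)
    (mul : L →ₗ[K] L →ₗ[K] L)
    (comm : ∀ x y : L, mul x y = mul y x)
    (jacobi : ∀ x y z : L, mul (mul x y) z + mul (mul z x) y + mul (mul y z) x = 0)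
    {A : Type*} [AddCommGroup A] [Module K A]
    (mulA : A →ₗ[K] A →ₗ[K] A)
    (anti : ∀ x y z : A, mulA (mulA x y) z = - mulA x (mulA y z))
    (φ : L →ₗ[K] A) (hinj : Function.Injective φ)
    (hhom : ∀ x y : L, φ (mul x y) = (1 / 2 : K) • (mulA (φ x) (φ y) + mulA (φ y) (φ x))) :
    lc K mul 4 = ⊥ := by
  have zero := antiassoc_mul_four_eq_zero K h2 mulA anti
  have key : ∀ x y z w : L, mul (mul (mul x y) z) w = 0 := by
    intro x y z w
    apply hinj
    -- `anti` brings each of the eight monomials to the bracketing `a(b(cd))`.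
    simp only [hhom, map_add, map_smul, LinearMap.add_apply, LinearMap.smul_apply, anti, map_neg,
      LinearMap.neg_apply, zero, map_zero, neg_zero, add_zero, smul_zero]
  have step2 : ∀ u ∈ lc K mul 2, ∀ z w : L, mul (mul u z) w = 0 := by
    intro u hu z w
    refine Submodule.span_induction (p := fun u _ => mul (mul u z) w = 0) ?_ (by simp)
      (fun a b _ _ ha hb => by simp [ha, hb]) (fun r a _ ha => by simp [ha]) hu
    rintro _ ⟨x, -, y, -, rfl⟩
    exact key x y z w
  have step3 : ∀ v ∈ lc K mul 3, ∀ w : L, mul v w = 0 := by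
    intro v hv w
    refine Submodule.span_induction (p := fun v _ => mul v w = 0) ?_ (by simp)
      (fun a b _ _ ha hb => by simp [ha, hb]) (fun r a _ ha => by simp [ha]) hv
    rintro _ ⟨u, hu, z, -, rfl⟩
    exact step2 u hu z w
  refine Submodule.span_eq_bot.mpr ?_
  rintro _ ⟨v, hv, w, -, rfl⟩
  exact step3 v hv w
end

section
/- Let L be a mock-Lie algebra over a field K of characteristic different from 2 and 3, and let I be an ideal of L, with both I and L/I carrying their induced mock-Lie algebra structures. Then dim U(L) ≤ dim U(L/I) · dim U(I), where U denotes the universal enveloping algebra. -/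
/-!
Write `W` for the image of `I` in `U(L)`, `A` for the image of `U(I)` and `M = L/I`.

Suppose first that `U(I)` is finite-dimensional. Since `a x = -x a + 2 (x ∘ a)` for `a ∈ I` and
`x ∈ L`, the left ideal `U(L) W` is two-sided, and `U(L) / U(L) W` is a quotient of `U(M)`. So
`U(L) = S + U(L) W` for a subspace `S` with `dim S ≤ dim U(M)`, and iterating gives
`U(L) = S A + U(L) W ^ k` for every `k`. The Jacobi identity makes all cubes of elements of `W` vanish
(here the characteristic is not `2` or `3`), and `W` is finite-dimensional and closed under
`x y + y x`; by the Engel-type theorem `exists_pow_eq_bot` it is nilpotent. Hence `U(L) = S A`, which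
is `rank_uEnv_le_of_finite`.

If `U(I)` is infinite-dimensional, the filtration argument breaks down, but
`μ = dim U(M) · dim U(I)` is an infinite cardinal and counting is enough, once the image of `L` in
`U(L)` is bounded by `μ`. The difficulty is that `M → U(M)` need not be injective. Its kernel `Z`
annihilates `M` (`mul_eq_zero_of_uι_eq_zero`), so `M ∘ M` is spanned by products of elements from a
complement of `Z`, and has dimension at most `(dim U(M)) ^ 2`; moreover `Z` is contained in `M ∘ M`
(`mem_range_of_uι_eq_zero`). So `dim M ≤ μ`, and `U(L)`, being generated by the images of `M` (lifted
to `L`) and `I`, is a quotient of the tensor algebra of a space of dimension at most `μ`. This is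
`rank_uEnv_le_of_infinite`.
-/

variable (K : Type*) [Field K]

/-- The defining relations of the universal enveloping algebra of a mock-Lie algebra. -/
inductive URel {M : Type*} [AddCommGroup M] [Module K M]
    (mul : M →ₗ[K] M →ₗ[K] M) : TensorAlgebra K M → TensorAlgebra K M → Prop
  | mk (x y : M) : URel mul
      ((1 / 2 : K) • (TensorAlgebra.ι K x * TensorAlgebra.ι K y +
        TensorAlgebra.ι K y * TensorAlgebra.ι K x))
      (TensorAlgebra.ι K (mul x y))

/-- The universal enveloping algebra `U(M)` of a mock-Lie algebra `(M, mul)`: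
the quotient of the tensor algebra `T(M)` by the two-sided ideal generated by the
elements `(1/2)(x ⊗ y + y ⊗ x) - x ∘ y`. -/
abbrev UEnv {M : Type*} [AddCommGroup M] [Module K M]
    (mul : M →ₗ[K] M →ₗ[K] M) : Type _ := RingQuot (URel K mul)

/-! ### Nilpotency of Jordan closed subspaces -/

section Engel

variable {K} {A : Type*} [Ring A] [Algebra K A]

/-- Left multiplication by `T`, as an endomorphism of the additive monoid of subspaces of `A`. -/
def leftMulEnd (T : Submodule K A) : AddMonoid.End (Submodule K A) := AddMonoidHom.mulLeft T

/-- Right multiplication by `T`, as an endomorphism of the additive monoid of subspaces of `A`. -/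
def rightMulEnd (T : Submodule K A) : AddMonoid.End (Submodule K A) := AddMonoidHom.mulRight T

theorem leftMulEnd_pow (T : Submodule K A) (k : ℕ) (X : Submodule K A) :
    (leftMulEnd T ^ k) X = T ^ k * X := by
  induction k generalizing X with
  | zero => simp
  | succ k ih =>
    rw [pow_succ, pow_succ, mul_assoc]
    exact ih (T * X)

theorem rightMulEnd_pow (T : Submodule K A) (k : ℕ) (X : Submodule K A) :
    (rightMulEnd T ^ k) X = X * T ^ k := by
  induction k generalizing X with
  | zero => simp
  | succ k ih =>
    rw [pow_succ, pow_succ', ← mul_assoc]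
    exact ih (X * T)

/-- For nilpotent `T`, the operator `X ↦ T X + X T` on subspaces is nilpotent, being a sum of two
commuting nilpotent operators. -/
theorem iterated_mul_eq_bot (T : Submodule K A) (n : ℕ) (hn : T ^ n = ⊥) :
    ∃ N, ((leftMulEnd T + rightMulEnd T) ^ N) ⊤ = ⊥ := by
  have hcomm : Commute (leftMulEnd T) (rightMulEnd T) :=
    AddMonoidHom.ext fun X => (mul_assoc T X T).symm
  obtain ⟨N, hN⟩ := hcomm.isNilpotent_add
    ⟨n, AddMonoidHom.ext fun X => (leftMulEnd_pow T n X).trans (by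
      rw [hn, Submodule.bot_mul]; rfl)⟩
    ⟨n, AddMonoidHom.ext fun X => (rightMulEnd_pow T n X).trans (by
      rw [hn, Submodule.mul_bot]; rfl)⟩
  exact ⟨N, by rw [hN]; rfl⟩

/-- A nilpotent proper subspace `T` of a Jordan closed subspace `W` is normalised by some element of
`W` outside `T`: with `D X = T X + X T`, such an element lies in `D ^ m ⊤` for the last `m` with
`W ⊓ D ^ m ⊤ ≰ T`. -/
theorem exists_normalizing (W T : Submodule K A)
    (hJ : ∀ x ∈ W, ∀ y ∈ W, x * y + y * x ∈ W) (hTW : T < W) (n : ℕ) (hn : T ^ n = ⊥) :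
    ∃ w ∈ W, w ∉ T ∧ ∀ t ∈ T, t * w + w * t ∈ T := by
  classical
  obtain ⟨N, hN⟩ := iterated_mul_eq_bot T n hn
  set D := leftMulEnd T + rightMulEnd T with hD
  have hex : ∃ k, W ⊓ (D ^ k) ⊤ ≤ T := ⟨N, by rw [hN]; simp⟩
  have hm := Nat.find_spec hex
  have hmin := fun k => Nat.find_min hex (m := k)
  generalize Nat.find hex = m at hm hmin
  rcases m with _ | m
  · exact absurd (by simpa using hm) (not_le_of_gt hTW)
  · obtain ⟨w, ⟨hwW, hwD⟩, hwT⟩ := Set.not_subset.1 (hmin m (Nat.lt_succ_self m))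
    refine ⟨w, hwW, hwT, fun t ht => hm ⟨hJ t (hTW.le ht) w hwW, ?_⟩⟩
    have hstep : (D ^ (m + 1)) ⊤ = T * (D ^ m) ⊤ + (D ^ m) ⊤ * T := by
      rw [pow_succ', hD]; rfl
    rw [hstep]
    exact Submodule.add_mem_sup (Submodule.mul_mem_mul ht hwD) (Submodule.mul_mem_mul hwD ht)

/-- A nilpotent subspace `T` stays nilpotent after adjoining a normalising `w` with `w ^ 3 = 0`.
The left ideals `⊤ * T ^ i` are stable under right multiplication by `w`, and three factors from
`T ⊔ K w` carry each into the next: if none of the factors comes from `T`, their product is zero. -/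
theorem isNilpotent_sup_span (T : Submodule K A) (w : A)
    (hT : ∀ t ∈ T, t * w + w * t ∈ T) (hw : w * w * w = 0) (n : ℕ) (hn : T ^ n = ⊥) :
    ∃ m, (T ⊔ K ∙ w) ^ m = ⊥ := by
  set S : Submodule K A := K ∙ w with hS
  have hTS : T * S ≤ S * T ⊔ T := by
    refine Submodule.mul_le.2 fun t ht s hs => ?_
    obtain ⟨c, rfl⟩ := Submodule.mem_span_singleton.1 hs
    have : t * c • w = ((-c) • w) * t + c • (t * w + w * t) := by
      simp only [mul_smul_comm, smul_mul_assoc, smul_add]; module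
    rw [this]
    exact Submodule.add_mem_sup (Submodule.mul_mem_mul
      (Submodule.smul_mem _ _ (Submodule.mem_span_singleton_self w)) ht)
      (Submodule.smul_mem _ _ (hT t ht))
  have hSSS : S * S * S = ⊥ := by
    rw [hS, Submodule.span_mul_span, Submodule.span_mul_span]; simp [hw]
  have htop : ∀ X : Submodule K A, X ≤ ⊤ * X := fun X x hx => by
    simpa using Submodule.mul_mem_mul (Submodule.mem_top (R := K) (x := (1 : A))) hx
  have hPS : ∀ i, T ^ i * S ≤ ⊤ * T ^ i := by
    intro i
    induction i with
    | zero => intro x _; simp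
    | succ i ih =>
      calc T ^ (i + 1) * S = T ^ i * (T * S) := by rw [pow_succ, mul_assoc]
        _ ≤ T ^ i * (S * T ⊔ T) := mul_le_mul_right hTS _
        _ = T ^ i * S * T ⊔ T ^ (i + 1) := by rw [Submodule.mul_sup, mul_assoc, pow_succ]
        _ ≤ ⊤ * T ^ (i + 1) := by
          refine sup_le ?_ (htop _)
          rw [pow_succ, ← mul_assoc]
          exact mul_le_mul_left ih _
  have hQS : ∀ i, ⊤ * T ^ i * S ≤ ⊤ * T ^ i := fun i => by
    calc ⊤ * T ^ i * S = ⊤ * (T ^ i * S) := mul_assoc _ _ _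
      _ ≤ ⊤ * (⊤ * T ^ i) := mul_le_mul_right (hPS i) _
      _ = (⊤ * ⊤) * T ^ i := (mul_assoc _ _ _).symm
      _ ≤ ⊤ * T ^ i := mul_le_mul_left le_top _
  have hQT : ∀ i, ⊤ * T ^ i * T = ⊤ * T ^ (i + 1) := fun i => by rw [pow_succ, mul_assoc]
  have hQ : ∀ i, ⊤ * T ^ (i + 1) ≤ ⊤ * T ^ i := fun i => by
    rw [pow_succ', ← mul_assoc]; exact mul_le_mul_left le_top _
  have hstable : ∀ i, ⊤ * T ^ i * (T ⊔ S) ≤ ⊤ * T ^ i := fun i => by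
    rw [Submodule.mul_sup, hQT]; exact sup_le (hQ i) (hQS i)
  have hthree : ∀ i, ⊤ * T ^ i * (T ⊔ S) * (T ⊔ S) * (T ⊔ S) ≤ ⊤ * T ^ (i + 1) := fun i => by
    have h1 : ⊤ * T ^ i * (T ⊔ S) ≤ ⊤ * T ^ (i + 1) ⊔ ⊤ * T ^ i * S := by
      rw [Submodule.mul_sup, hQT]
    have h2 : ⊤ * T ^ i * (T ⊔ S) * (T ⊔ S) ≤ ⊤ * T ^ (i + 1) ⊔ ⊤ * T ^ i * S * S := by
      refine (mul_le_mul_left h1 _).trans ?_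
      rw [Submodule.sup_mul]
      refine sup_le ((hstable _).trans le_sup_left) ?_
      rw [Submodule.mul_sup]
      refine sup_le_sup ?_ le_rfl
      rw [← hQT]; exact mul_le_mul_left (hQS i) _
    refine (mul_le_mul_left h2 _).trans ?_
    rw [Submodule.sup_mul]
    refine sup_le (hstable _) ?_
    rw [Submodule.mul_sup]
    refine sup_le ?_ ?_
    · rw [← hQT]; exact mul_le_mul_left ((mul_le_mul_left (hQS i) _).trans (hQS i)) _
    · rw [mul_assoc, mul_assoc, ← mul_assoc S, hSSS]; simp
  have hpow : ∀ i, (T ⊔ S) ^ (3 * i) ≤ ⊤ * T ^ i := by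
    intro i
    induction i with
    | zero => intro x _; simp
    | succ i ih =>
      have : (T ⊔ S) ^ (3 * (i + 1)) = (T ⊔ S) ^ (3 * i) * (T ⊔ S) * (T ⊔ S) * (T ⊔ S) := by
        rw [← pow_succ, ← pow_succ, ← pow_succ]; congr 1
      rw [this]
      exact (mul_le_mul_left (mul_le_mul_left (mul_le_mul_left ih _) _) _).trans (hthree i)
  exact ⟨3 * n, by simpa [hn] using hpow n⟩

/-- A Jacobson–Engel theorem: a finite-dimensional Jordan closed subspace whose elements all have
cube zero is nilpotent. `hlin` is the linearisation of `hcube`. The proof enlarges a nilpotent Jordan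
closed `T ≤ W` by one dimension at a time. -/
theorem exists_pow_eq_bot (h2 : (2 : K) ≠ 0) (W : Submodule K A) [FiniteDimensional K W]
    (hJ : ∀ x ∈ W, ∀ y ∈ W, x * y + y * x ∈ W) (hcube : ∀ x ∈ W, x * x * x = 0)
    (hlin : ∀ w ∈ W, ∀ t ∈ W, w * w * t + w * t * w + t * w * w = 0) :
    ∃ n, W ^ n = ⊥ := by
  have key : ∀ d, ∀ T : Submodule K A, T ≤ W → (∀ x ∈ T, ∀ y ∈ T, x * y + y * x ∈ T) →
      (∃ n, T ^ n = ⊥) → Module.finrank K W ≤ Module.finrank K T + d → ∃ n, W ^ n = ⊥ := by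
    intro d
    induction d with
    | zero =>
      intro T hTW _ hn hd
      rwa [← Submodule.eq_of_le_of_finrank_le hTW (by simpa using hd)]
    | succ d ih =>
      intro T hTW hTJ hn hd
      rcases hTW.eq_or_lt with rfl | hlt
      · exact hn
      obtain ⟨n, hn⟩ := hn
      have hsq : ∀ x ∈ W, x * x ∈ W := fun x hx => by
        have := W.smul_mem (2 : K)⁻¹ (hJ x hx x hx)
        rwa [← two_smul K (x * x), smul_smul, inv_mul_cancel₀ h2, one_smul] at this
      obtain ⟨w, hwW, hwT, hw, hww⟩ : ∃ w ∈ W, w ∉ T ∧ (∀ t ∈ T, t * w + w * t ∈ T) ∧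
          w * w ∈ T := by
        obtain ⟨w, hwW, hwT, hw⟩ := exists_normalizing W T hJ hlt n hn
        -- If `w * w ∉ T`, it replaces `w`: it normalises `T` by `hlin`, and `(w * w) ^ 2 = 0`.
        by_cases hww : w * w ∈ T
        · exact ⟨w, hwW, hwT, hw, hww⟩
        · refine ⟨w * w, hsq w hwW, hww, fun t ht => ?_, ?_⟩
          · have h := hw _ (hw t ht)
            have h' : t * (w * w) + w * w * t =
                -((t * w + w * t) * w + w * (t * w + w * t)) := by
              rw [eq_neg_iff_add_eq_zero, ← add_zero (0 : A)]
              nth_rewrite 1 [← hlin w hwW t (hTW ht)]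
              rw [← hlin w hwW t (hTW ht)]
              noncomm_ring
            rw [h']
            exact T.neg_mem h
          · have : w * w * (w * w) = 0 := by rw [← mul_assoc, hcube w hwW, zero_mul]
            rw [this]; exact T.zero_mem
      refine ih (T ⊔ K ∙ w) (sup_le hTW ((Submodule.span_singleton_le_iff_mem _ _).2 hwW)) ?_
        (isNilpotent_sup_span T w hw (hcube w hwW) n hn) ?_
      · intro x hx y hy
        obtain ⟨t, ht, s, hs, rfl⟩ := Submodule.mem_sup.1 hx
        obtain ⟨t', ht', s', hs', rfl⟩ := Submodule.mem_sup.1 hy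
        obtain ⟨c, rfl⟩ := Submodule.mem_span_singleton.1 hs
        obtain ⟨c', rfl⟩ := Submodule.mem_span_singleton.1 hs'
        have : (t + c • w) * (t' + c' • w) + (t' + c' • w) * (t + c • w) =
            (t * t' + t' * t) + c' • (t * w + w * t) + c • (t' * w + w * t') +
              (2 * c * c') • (w * w) := by
          simp only [mul_add, add_mul, mul_smul_comm, smul_mul_assoc, smul_add, smul_smul]
          module
        rw [this]
        exact Submodule.mem_sup_left (T.add_mem (T.add_mem (T.add_mem (hTJ t ht t' ht')
          (T.smul_mem _ (hw t ht))) (T.smul_mem _ (hw t' ht'))) (T.smul_mem _ hww))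
      · have hle : T ⊔ K ∙ w ≤ W := sup_le hTW ((Submodule.span_singleton_le_iff_mem _ _).2 hwW)
        have : FiniteDimensional K ↥(T ⊔ K ∙ w) := Submodule.finiteDimensional_of_le hle
        have := Submodule.finrank_lt_finrank_of_lt (s := T) (t := T ⊔ K ∙ w)
          (lt_of_le_of_ne le_sup_left fun h => hwT
            (h ▸ Submodule.mem_sup_right (Submodule.mem_span_singleton_self w)))
        omega
  exact key (Module.finrank K W) ⊥ bot_le (by simp) ⟨1, by simp⟩ (by simp)

end Engel

/-! ### Universal property and relations of the enveloping algebra -/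

section Envelope

open TensorProduct

variable {K} {M : Type*} [AddCommGroup M] [Module K M] (mul : M →ₗ[K] M →ₗ[K] M)

/-- The canonical map `M → U(M)`. It need not be injective. -/
noncomputable def uι : M →ₗ[K] UEnv K mul :=
  (RingQuot.mkAlgHom K (URel K mul)).toLinearMap ∘ₗ TensorAlgebra.ι K

theorem uι_mul_add (h2 : (2 : K) ≠ 0) (x y : M) :
    uι mul x * uι mul y + uι mul y * uι mul x = (2 : K) • uι mul (mul x y) := by
  have h := RingQuot.mkAlgHom_rel K (URel.mk (K := K) (mul := mul) x y)
  have h' : uι mul (mul x y) =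
      (1 / 2 : K) • (uι mul x * uι mul y + uι mul y * uι mul x) := by
    simp only [map_smul, map_add, map_mul] at h
    exact h.symm
  rw [h', smul_smul, mul_one_div_cancel h2, one_smul]

/-- The universal property of `U(M)`. -/
noncomputable def uLift {B : Type*} [Ring B] [Algebra K B] (h2 : (2 : K) ≠ 0) (f : M →ₗ[K] B)
    (hf : ∀ x y, f x * f y + f y * f x = (2 : K) • f (mul x y)) : UEnv K mul →ₐ[K] B :=
  RingQuot.liftAlgHom K ⟨TensorAlgebra.lift K f, by
    rintro _ _ ⟨x, y⟩
    simp only [map_smul, map_add, map_mul, TensorAlgebra.lift_ι_apply]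
    rw [hf, smul_smul, one_div_mul_cancel h2, one_smul]⟩

theorem uLift_uι {B : Type*} [Ring B] [Algebra K B] (h2 : (2 : K) ≠ 0) (f : M →ₗ[K] B)
    (hf : ∀ x y, f x * f y + f y * f x = (2 : K) • f (mul x y)) (x : M) :
    uLift mul h2 f hf (uι mul x) = f x := by
  unfold uLift uι
  rw [LinearMap.comp_apply, AlgHom.toLinearMap_apply, RingQuot.liftAlgHom_mkAlgHom_apply,
    TensorAlgebra.lift_ι_apply]

theorem uEnv_induction {p : UEnv K mul → Prop} (hC : ∀ r : K, p (algebraMap K _ r))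
    (hι : ∀ x, p (uι mul x)) (hmul : ∀ a b, p a → p b → p (a * b))
    (hadd : ∀ a b, p a → p b → p (a + b)) (u : UEnv K mul) : p u := by
  obtain ⟨t, rfl⟩ := RingQuot.mkAlgHom_surjective K (URel K mul) u
  induction t using TensorAlgebra.induction with
  | algebraMap r => simpa using hC r
  | ι x => exact hι x
  | mul a b ha hb => rw [map_mul]; exact hmul _ _ ha hb
  | add a b ha hb => rw [map_add]; exact hadd _ _ ha hb

theorem algHom_surjective_of_uι_mem {B : Type*} [Ring B] [Algebra K B] (φ : B →ₐ[K] UEnv K mul)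
    (h : ∀ x, uι mul x ∈ φ.range) : Function.Surjective φ := fun u =>
  uEnv_induction mul (p := fun u => u ∈ φ.range) (fun r => φ.range.algebraMap_mem r) h
    (fun _ _ => φ.range.mul_mem) (fun _ _ => φ.range.add_mem) u

theorem one_le_rank_uEnv (h2 : (2 : K) ≠ 0) : 1 ≤ Module.rank K (UEnv K mul) := by
  have : Nontrivial (UEnv K mul) :=
    (uLift mul h2 (B := K) 0 (by simp)).toRingHom.domain_nontrivial
  exact Cardinal.one_le_iff_ne_zero.2 (rank_pos (R := K) (M := UEnv K mul)).ne'

/-- The Jacobi identity for `x, x, t`, multiplied out in the enveloping algebra. -/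
theorem uι_jacobi (h2 : (2 : K) ≠ 0)
    (jacobi : ∀ x y z : M, mul (mul x y) z + mul (mul z x) y + mul (mul y z) x = 0) (x t : M) :
    uι mul x * uι mul x * uι mul t + uι mul x * uι mul t * uι mul x +
      uι mul t * uι mul x * uι mul x = 0 := by
  have e : ∀ a b c : M, (uι mul a * uι mul b + uι mul b * uι mul a) * uι mul c +
      uι mul c * (uι mul a * uι mul b + uι mul b * uι mul a) =
      (2 * 2 : K) • uι mul (mul (mul a b) c) := by
    intro a b c
    rw [uι_mul_add mul h2 a b, smul_mul_assoc, mul_smul_comm, ← smul_add, uι_mul_add mul h2,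
      smul_smul]
  have h := congrArg (fun v => (2 * 2 : K) • uι mul v) (jacobi x x t)
  simp only [map_add, smul_add, ← e, map_zero, smul_zero] at h
  refine (smul_eq_zero_iff_right (mul_ne_zero h2 h2)).1 ?_
  rw [← h]
  simp only [mul_add, add_mul, mul_assoc]
  module

theorem uι_cube (h2 : (2 : K) ≠ 0) (h3 : (3 : K) ≠ 0)
    (jacobi : ∀ x y z : M, mul (mul x y) z + mul (mul z x) y + mul (mul y z) x = 0) (x : M) :
    uι mul x * uι mul x * uι mul x = 0 := by
  refine (smul_eq_zero_iff_right h3).1 ?_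
  rw [← uι_jacobi mul h2 jacobi x x]
  module

/-! ### The kernel of the canonical map -/

/-- The kernel of `M → U(M)` lies in the annihilator of `M`, because `x ↦ -2 (x ∘ ·)` is a
representation of the mock-Lie algebra `M` on itself. -/
theorem mul_eq_zero_of_uι_eq_zero (h2 : (2 : K) ≠ 0) (comm : ∀ x y : M, mul x y = mul y x)
    (jacobi : ∀ x y z : M, mul (mul x y) z + mul (mul z x) y + mul (mul y z) x = 0)
    {x : M} (hx : uι mul x = 0) (y : M) : mul x y = 0 := by
  have hf : ∀ x y : M, ((-2 : K) • mul : M →ₗ[K] Module.End K M) x * ((-2 : K) • mul) y +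
      ((-2 : K) • mul : M →ₗ[K] Module.End K M) y * ((-2 : K) • mul) x =
      (2 : K) • ((-2 : K) • mul) (mul x y) := by
    intro x y
    ext z
    have h : mul (mul x y) z = -(mul x (mul y z) + mul y (mul x z)) := by
      rw [comm x (mul y z), comm y (mul x z), comm x z, eq_neg_iff_add_eq_zero, ← jacobi x y z]
      abel
    simp only [LinearMap.add_apply, Module.End.mul_apply, LinearMap.smul_apply, map_smul, h]
    module
  have h := uLift_uι mul h2 (B := Module.End K M) ((-2 : K) • mul) hf x
  rw [hx, map_zero] at h
  have h' : (-2 : K) • mul x y = 0 := (LinearMap.congr_fun h y).symm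
  exact (smul_eq_zero.1 h').resolve_left (neg_ne_zero.2 h2)

/-- The kernel of `M → U(M)` lies in `M ∘ M`: a linear form vanishing on `M ∘ M` induces
an algebra map from `U(M)` to the dual numbers. -/
theorem mem_range_of_uι_eq_zero (h2 : (2 : K) ≠ 0) {x : M} (hx : uι mul x = 0) :
    x ∈ LinearMap.range (TensorProduct.lift mul) := by
  by_contra hn
  obtain ⟨f, hfx, hf⟩ := Submodule.exists_le_ker_of_notMem hn
  have hf' : ∀ a b, f (mul a b) = 0 := fun a b => hf ⟨a ⊗ₜ b, by simp⟩
  have h := uLift_uι mul h2 (B := DualNumber K)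
    ((LinearMap.toSpanSingleton K (DualNumber K) DualNumber.eps) ∘ₗ f)
    (fun a b => by simp [hf']) x
  rw [hx, map_zero] at h
  have h' := congrArg TrivSqZeroExt.snd h
  simp at h'
  exact hfx h'.symm

/-! ### Finite-dimensional `U(I)` -/

theorem mul_swap_identity {R : Type*} [Ring R] (v a x : R) :
    v * a * x = (-(v * x)) * a + v * (x * a + a * x) := by
  noncomm_ring

/-- Finite-dimensional case, with `B` in the role of `U(I)`. If `W` is the image of `I` and `S` a
complement of the two-sided ideal `⊤ * W`, then `⊤ = S * A + ⊤ * W ^ k` for all `k`, where `A` is the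
image of `B`; and `W` is nilpotent. -/
theorem rank_uEnv_le_of_finite (h2 : (2 : K) ≠ 0) (h3 : (3 : K) ≠ 0)
    {L : Type*} [AddCommGroup L] [Module K L]
    (mul : L →ₗ[K] L →ₗ[K] L)
    (jacobi : ∀ x y z : L, mul (mul x y) z + mul (mul z x) y + mul (mul y z) x = 0)
    (I : Submodule K L) (hI : ∀ x : L, ∀ y ∈ I, mul x y ∈ I)
    (mulQ : (L ⧸ I) →ₗ[K] (L ⧸ I) →ₗ[K] (L ⧸ I))
    (hmulQ : ∀ x y : L, mulQ (I.mkQ x) (I.mkQ y) = I.mkQ (mul x y))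
    {B : Type*} [Ring B] [Algebra K B] [FiniteDimensional K B] (j : B →ₐ[K] UEnv K mul)
    (hj : ∀ a ∈ I, uι mul a ∈ j.range) :
    Module.rank K (UEnv K mul) ≤
      Module.rank K (UEnv K mulQ) * Module.rank K (LinearMap.range j.toLinearMap) := by
  set A : Submodule K (UEnv K mul) := LinearMap.range j.toLinearMap with hA
  set W : Submodule K (UEnv K mul) := I.map (uι mul) with hWdef
  have hWA : W ≤ A := by
    rintro _ ⟨a, ha, rfl⟩
    exact hj a ha
  have : FiniteDimensional K W := Submodule.finiteDimensional_of_le hWA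
  obtain ⟨n, hn⟩ : ∃ n, W ^ n = ⊥ := by
    refine exists_pow_eq_bot h2 W ?_ ?_ ?_
    · rintro _ ⟨a, -, rfl⟩ _ ⟨b, hb, rfl⟩
      rw [uι_mul_add mul h2]
      exact W.smul_mem _ ⟨_, hI a b hb, rfl⟩
    · rintro _ ⟨a, -, rfl⟩
      exact uι_cube mul h2 h3 jacobi a
    · rintro _ ⟨a, -, rfl⟩ _ ⟨b, -, rfl⟩
      exact uι_jacobi mul h2 jacobi a b
  have hWn : ∀ k, W ^ k ≤ A := by
    intro k
    induction k with
    | zero =>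
      rw [pow_zero, Submodule.one_le]
      exact ⟨1, map_one j⟩
    | succ k ih =>
      rw [pow_succ]
      refine Submodule.mul_le.2 fun a ha b hb => ?_
      obtain ⟨a, rfl⟩ := ih ha
      obtain ⟨b, rfl⟩ := hWA hb
      exact ⟨a * b, map_mul j a b⟩
  -- The left ideal generated by `I` is two-sided, since `a x = -x a + 2 (x ∘ a)`.
  have hright : ∀ u, ∀ p ∈ (⊤ * W : Submodule K (UEnv K mul)), p * u ∈ ⊤ * W := by
    intro u
    induction u using uEnv_induction mul with
    | hC r =>
      intro p hp
      rw [← Algebra.commutes, ← Algebra.smul_def]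
      exact Submodule.smul_mem _ _ hp
    | hι x =>
      intro p hp
      induction hp using Submodule.mul_induction_on' with
      | mem_mul_mem v hv w hw =>
        obtain ⟨a, ha, rfl⟩ := hw
        have : v * uι mul a * uι mul x =
            (-(v * uι mul x)) * uι mul a + v * ((2 : K) • uι mul (mul x a)) := by
          rw [← uι_mul_add mul h2]; exact mul_swap_identity _ _ _
        rw [this]
        exact Submodule.add_mem _ (Submodule.mul_mem_mul trivial ⟨a, ha, rfl⟩)
          (Submodule.mul_mem_mul trivial (W.smul_mem _ ⟨_, hI x a ha, rfl⟩))
      | add v _ w _ hv hw => rw [add_mul]; exact Submodule.add_mem _ hv hw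
    | hmul a b ha hb => intro p hp; rw [← mul_assoc]; exact hb _ (ha p hp)
    | hadd a b ha hb =>
      intro p hp; rw [mul_add]; exact Submodule.add_mem _ (ha p hp) (hb p hp)
  let J : Ideal (UEnv K mul) :=
    { (⊤ * W : Submodule K (UEnv K mul)) with
      smul_mem' := fun c x hx => by
        have h := Submodule.mul_mem_mul (Submodule.mem_top (R := K) (x := c)) hx
        rw [← mul_assoc] at h
        exact mul_le_mul_left (le_top : (⊤ * ⊤ : Submodule K (UEnv K mul)) ≤ ⊤) W h }
  have hJ : ∀ u, u ∈ J ↔ u ∈ (⊤ * W : Submodule K (UEnv K mul)) := fun _ => Iff.rfl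
  have : J.IsTwoSided := ⟨fun b h => hright b _ h⟩
  let q : (L ⧸ I) →ₗ[K] UEnv K mul ⧸ J :=
    I.liftQ ((Ideal.Quotient.mkₐ K J).toLinearMap ∘ₗ uι mul) fun a ha => by
      refine Ideal.Quotient.eq_zero_iff_mem.2 ((hJ _).2 ?_)
      simpa using Submodule.mul_mem_mul (Submodule.mem_top (R := K) (x := (1 : UEnv K mul)))
        (Submodule.mem_map_of_mem (f := uι mul) ha)
  have hq : ∀ x, q (I.mkQ x) = Ideal.Quotient.mkₐ K J (uι mul x) := fun x => rfl
  have hqJ : ∀ x y, q x * q y + q y * q x = (2 : K) • q (mulQ x y) := by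
    intro x y
    obtain ⟨x, rfl⟩ := I.mkQ_surjective x
    obtain ⟨y, rfl⟩ := I.mkQ_surjective y
    rw [hmulQ, hq, hq, hq, ← map_smul, ← uι_mul_add mul h2, map_add, map_mul, map_mul]
  let ψ := uLift mulQ h2 q hqJ
  have hψ : Function.Surjective ψ := by
    intro v
    obtain ⟨u, rfl⟩ := Ideal.Quotient.mkₐ_surjective K J v
    change _ ∈ ψ.range
    induction u using uEnv_induction mul with
    | hC r => rw [AlgHom.commutes]; exact ψ.range.algebraMap_mem r
    | hι x => exact ⟨uι mulQ (I.mkQ x), (uLift_uι mulQ h2 q hqJ _).trans (hq x)⟩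
    | hmul a b ha hb => rw [map_mul]; exact ψ.range.mul_mem ha hb
    | hadd a b ha hb => rw [map_add]; exact ψ.range.add_mem ha hb
  obtain ⟨S, hS⟩ := (⊤ * W : Submodule K (UEnv K mul)).exists_isCompl
  have hrS : Module.rank K S ≤ Module.rank K (UEnv K mulQ) := by
    refine (LinearMap.rank_le_of_injective
      ((Ideal.Quotient.mkₐ K J).toLinearMap.domRestrict S) ?_).trans
      (LinearMap.rank_le_of_surjective ψ.toLinearMap hψ)
    rw [injective_iff_map_eq_zero]
    intro s hs
    have h1 : (s : UEnv K mul) ∈ (⊤ * W : Submodule K (UEnv K mul)) :=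
      (hJ _).1 (Ideal.Quotient.eq_zero_iff_mem.1 hs)
    exact Subtype.ext (Submodule.disjoint_def.1 hS.disjoint _ h1 s.2)
  have htop : ∀ k, (⊤ : Submodule K (UEnv K mul)) ≤ S * A ⊔ ⊤ * W ^ k := by
    intro k
    induction k with
    | zero => simp
    | succ k ih =>
      refine ih.trans (sup_le le_sup_left ?_)
      calc ⊤ * W ^ k = (⊤ * W ⊔ S) * W ^ k := by rw [hS.sup_eq_top]
        _ = ⊤ * W ^ (k + 1) ⊔ S * W ^ k := by rw [Submodule.sup_mul, pow_succ', mul_assoc]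
        _ ≤ S * A ⊔ ⊤ * W ^ (k + 1) :=
          sup_le le_sup_right (le_sup_of_le_left (mul_le_mul_right (hWn k) _))
  have hSA : S * A = ⊤ := top_le_iff.1 (by simpa [hn] using htop n)
  have : Module.Free K A := Module.Free.of_divisionRing K A
  have : Module.Free K S := Module.Free.of_divisionRing K S
  calc Module.rank K (UEnv K mul) = Module.rank K (S * A : Submodule K (UEnv K mul)) := by
        rw [hSA, rank_top]
    _ ≤ Module.rank K (S ⊗[K] A) :=
      LinearMap.rank_le_of_surjective _ (Submodule.mulMap'_surjective S A)
    _ = Module.rank K S * Module.rank K A := rank_tensorProduct'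
    _ ≤ _ := mul_le_mul_left hrS _

/-! ### Infinite-dimensional `U(I)` -/

theorem exists_generalized_inverse {V V' : Type*} [AddCommGroup V] [Module K V]
    [AddCommGroup V'] [Module K V'] (f : V →ₗ[K] V') :
    ∃ s : V' →ₗ[K] V, ∀ x, f (s (f x)) = f x := by
  obtain ⟨g, hg⟩ := f.rangeRestrict.exists_rightInverse_of_surjective f.range_rangeRestrict
  obtain ⟨s, hs⟩ := g.exists_extend
  refine ⟨s, fun x => ?_⟩
  have h1 : f (g ⟨f x, x, rfl⟩) = f x :=
    congrArg Subtype.val (LinearMap.congr_fun hg ⟨f x, x, rfl⟩)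
  have h2 : s (f x) = g ⟨f x, x, rfl⟩ := LinearMap.congr_fun hs ⟨f x, x, rfl⟩
  rw [h2, h1]

theorem rank_tensorAlgebra_le (V : Type*) [AddCommGroup V] [Module K V] :
    Module.rank K (TensorAlgebra K V) ≤ Cardinal.lift (max Cardinal.aleph0 (Module.rank K V)) := by
  rw [TensorAlgebra.rank_eq]
  exact Cardinal.lift_le.2 (Cardinal.sum_pow_le_max_aleph0 _)

/-- Infinite-dimensional case. The canonical image of `L` in `U(L)` is contained in the image of a
linear map from `(U(L/I) × (U(L/I) ⊗ U(L/I))) × U(I)`, whose dimension is at most the infinite cardinal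
`μ = dim U(L/I) · dim U(I)`; hence `U(L)` is a quotient of the tensor algebra of that space. -/
theorem rank_uEnv_le_of_infinite (h2 : (2 : K) ≠ 0)
    {L : Type*} [AddCommGroup L] [Module K L]
    (mul : L →ₗ[K] L →ₗ[K] L)
    (comm : ∀ x y : L, mul x y = mul y x)
    (jacobi : ∀ x y z : L, mul (mul x y) z + mul (mul z x) y + mul (mul y z) x = 0)
    (I : Submodule K L)
    (mulI : I →ₗ[K] I →ₗ[K] I)
    (mulQ : (L ⧸ I) →ₗ[K] (L ⧸ I) →ₗ[K] (L ⧸ I))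
    (hmulQ : ∀ x y : L, mulQ (I.mkQ x) (I.mkQ y) = I.mkQ (mul x y))
    (j : UEnv K mulI →ₐ[K] UEnv K mul) (hj : ∀ a : I, j (uι mulI a) = uι mul a)
    (hinf : Cardinal.aleph0 ≤ Module.rank K (UEnv K mulI)) :
    Module.rank K (UEnv K mul) ≤
      Module.rank K (UEnv K mulQ) * Module.rank K (UEnv K mulI) := by
  have hQ1 := one_le_rank_uEnv mulQ h2
  set μ := Module.rank K (UEnv K mulQ) * Module.rank K (UEnv K mulI) with hμ
  have hIμ : Module.rank K (UEnv K mulI) ≤ μ := le_mul_of_one_le_left' hQ1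
  have hμinf : Cardinal.aleph0 ≤ μ := hinf.trans hIμ
  have hQμ : Module.rank K (UEnv K mulQ) ≤ μ :=
    le_mul_of_one_le_right' (Cardinal.one_le_aleph0.trans hinf)
  have commQ : ∀ x y, mulQ x y = mulQ y x := by
    intro x y
    obtain ⟨x, rfl⟩ := I.mkQ_surjective x
    obtain ⟨y, rfl⟩ := I.mkQ_surjective y
    rw [hmulQ, hmulQ, comm]
  have jacobiQ : ∀ x y z, mulQ (mulQ x y) z + mulQ (mulQ z x) y + mulQ (mulQ y z) x = 0 := by
    intro x y z
    obtain ⟨x, rfl⟩ := I.mkQ_surjective x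
    obtain ⟨y, rfl⟩ := I.mkQ_surjective y
    obtain ⟨z, rfl⟩ := I.mkQ_surjective z
    simp only [hmulQ, ← map_add, jacobi, map_zero]
  -- `s` is a generalised inverse of the possibly non-injective map `L ⧸ I → U(L ⧸ I)`.
  obtain ⟨s, hs⟩ : ∃ s : UEnv K mulQ →ₗ[K] L ⧸ I,
      ∀ x, uι mulQ (s (uι mulQ x)) = uι mulQ x := exists_generalized_inverse (uι mulQ)
  obtain ⟨σ, hσ⟩ := I.mkQ.exists_rightInverse_of_surjective I.range_mkQ
  have hker : ∀ x, uι mulQ (x - s (uι mulQ x)) = 0 := fun x => by rw [map_sub, hs, sub_self]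
  have hmulker : ∀ x y, mulQ x y = mulQ (s (uι mulQ x)) (s (uι mulQ y)) := by
    intro x y
    have h1 := mul_eq_zero_of_uι_eq_zero mulQ h2 commQ jacobiQ (hker x) y
    have h2 := mul_eq_zero_of_uι_eq_zero mulQ h2 commQ jacobiQ (hker y) (s (uι mulQ x))
    rw [map_sub, LinearMap.sub_apply, sub_eq_zero] at h1
    rw [map_sub, LinearMap.sub_apply, sub_eq_zero, commQ, commQ (s _) (s _)] at h2
    rw [h1, h2, commQ]
  -- The range of `m` contains all products in `L ⧸ I`, in particular the kernel of `uι mulQ`.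
  let m : UEnv K mulQ ⊗[K] UEnv K mulQ →ₗ[K] L ⧸ I :=
    TensorProduct.lift (mulQ.compl₁₂ s s)
  have hm : ∀ x ∈ LinearMap.range (TensorProduct.lift mulQ), ∃ t, m t = x := by
    rintro _ ⟨t, rfl⟩
    induction t with
    | zero => exact ⟨0, by simp⟩
    | tmul a b => exact ⟨uι mulQ a ⊗ₜ uι mulQ b, by simp [m, ← hmulker]⟩
    | add a b ha hb =>
      obtain ⟨a', ha⟩ := ha
      obtain ⟨b', hb⟩ := hb
      exact ⟨a' + b', by rw [map_add, map_add, ha, hb]⟩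
  let Φ : (UEnv K mulQ × (UEnv K mulQ ⊗[K] UEnv K mulQ)) × UEnv K mulI →ₗ[K] UEnv K mul :=
    LinearMap.coprod (LinearMap.coprod (uι mul ∘ₗ σ ∘ₗ s) (uι mul ∘ₗ σ ∘ₗ m)) j.toLinearMap
  have hΦ : ∀ x, ∃ v, Φ v = uι mul x := by
    intro x
    obtain ⟨t, ht⟩ := hm _ (mem_range_of_uι_eq_zero mulQ h2 (hker (I.mkQ x)))
    have hx : x - σ (I.mkQ x) ∈ I := by
      rw [← Submodule.Quotient.mk_eq_zero, ← Submodule.mkQ_apply, map_sub, sub_eq_zero]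
      exact (LinearMap.congr_fun hσ (I.mkQ x)).symm
    refine ⟨((uι mulQ (I.mkQ x), t), uι mulI ⟨_, hx⟩), ?_⟩
    have : Φ ((uι mulQ (I.mkQ x), t), uι mulI ⟨_, hx⟩) =
        uι mul (σ (s (uι mulQ (I.mkQ x)))) + uι mul (σ (m t)) + j (uι mulI ⟨_, hx⟩) := rfl
    rw [this, hj, ht, ← map_add, ← map_add, ← map_add, add_sub_cancel, add_sub_cancel]
  have hrank : Module.rank K ((UEnv K mulQ × (UEnv K mulQ ⊗[K] UEnv K mulQ)) × UEnv K mulI)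
      ≤ μ := by
    rw [rank_prod', rank_prod', rank_tensorProduct']
    exact Cardinal.add_le_of_le hμinf (Cardinal.add_le_of_le hμinf hQμ
      (Cardinal.mul_le_of_le hμinf hQμ hQμ)) hIμ
  have hsurj : Function.Surjective (TensorAlgebra.lift K Φ) :=
    algHom_surjective_of_uι_mem mul _ fun x => by
      obtain ⟨v, hv⟩ := hΦ x
      exact ⟨TensorAlgebra.ι K v, (TensorAlgebra.lift_ι_apply _ _).trans hv⟩
  refine (LinearMap.rank_le_of_surjective (TensorAlgebra.lift K Φ).toLinearMap hsurj).trans ?_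
  refine (rank_tensorAlgebra_le (K := K)
    ((UEnv K mulQ × (UEnv K mulQ ⊗[K] UEnv K mulQ)) × UEnv K mulI)).trans ?_
  rw [Cardinal.lift_id']
  exact max_le hμinf hrank

end Envelope

/-! ### The dimension bound -/

/-- if `I` is an ideal of a mock-Lie algebra `L` (over a field of
characteristic `≠ 2, 3`), and `I`, `L/I` carry the induced mock-Lie structures, then
`dim U(L) ≤ dim U(L/I) · dim U(I)`. -/
theorem uenv_dim_le_of_ideal (h2 : (2 : K) ≠ 0) (h3 : (3 : K) ≠ 0)
    {L : Type*} [AddCommGroup L] [Module K L]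
    (mul : L →ₗ[K] L →ₗ[K] L)
    (comm : ∀ x y : L, mul x y = mul y x)
    (jacobi : ∀ x y z : L, mul (mul x y) z + mul (mul z x) y + mul (mul y z) x = 0)
    (I : Submodule K L) (hI : ∀ x : L, ∀ y ∈ I, mul x y ∈ I)
    (mulI : I →ₗ[K] I →ₗ[K] I)
    (hmulI : ∀ a b : I, (mulI a b : L) = mul (a : L) (b : L))
    (mulQ : (L ⧸ I) →ₗ[K] (L ⧸ I) →ₗ[K] (L ⧸ I))
    (hmulQ : ∀ x y : L, mulQ (I.mkQ x) (I.mkQ y) = I.mkQ (mul x y)) :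
    Module.rank K (UEnv K mul) ≤
      Module.rank K (UEnv K mulQ) * Module.rank K (UEnv K mulI) := by
  let j : UEnv K mulI →ₐ[K] UEnv K mul :=
    uLift mulI h2 (uι mul ∘ₗ I.subtype) fun a b => by
      simpa [hmulI] using uι_mul_add mul h2 (a : L) (b : L)
  have hj : ∀ a : I, j (uι mulI a) = uι mul a := fun a => uLift_uι mulI h2 _ _ a
  rcases lt_or_ge (Module.rank K (UEnv K mulI)) Cardinal.aleph0 with hfin | hinf
  · have : FiniteDimensional K (UEnv K mulI) := Module.rank_lt_aleph0_iff.1 hfin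
    refine (rank_uEnv_le_of_finite h2 h3 mul jacobi I hI mulQ hmulQ j
      fun a ha => ⟨_, hj ⟨a, ha⟩⟩).trans (mul_le_mul_right ?_ _)
    exact LinearMap.rank_le_of_surjective _ j.toLinearMap.surjective_rangeRestrict
  · exact rank_uEnv_le_of_infinite h2 mul comm jacobi I mulI mulQ hmulQ j hj hinf
end

section
/- Let A be a commutative (possibly non-associative, non-unital) algebra over a field K of characteristic different from 2 and 3. Then exactly one of the following holds: (i) all products in A are zero; (ii) A decomposes as a vector space direct sum V ⊕ Ka, where all products of elements of V are zero, a∘x = x for every x ∈ V, and a∘a = 2a; (iii) A contains an element x such that x and x∘x are linearly independent. -/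
/-!
If no `x` makes `x, x ∘ x` linearly independent, then every square is a multiple `x ∘ x = l • x`.
Were all these squares zero, polarization (`2 ≠ 0`) would make all products vanish. Otherwise
some `a ≠ 0` can be rescaled so that `a ∘ a = 2a`. Comparing the squares of `a + x` and `a - x`
then gives `a ∘ x = x + (l / 2) a` for every `x` (`mul_left_of_square_multiples`).
Hence the eigenspace `V = {x | a ∘ x = x}` is a complement of `Ka`, and on `V` all squares, and so
by polarization all products, are zero. Conversely, in an algebra of type (ii), `x = v + c a`
satisfies `x ∘ x = 2c x`, so (ii) excludes (iii).
-/

section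

variable {K : Type*} [Field K] {A : Type*} [AddCommGroup A] [Module K A]

lemma not_linearIndependent_square_iff (mul : A →ₗ[K] A →ₗ[K] A) (x : A) :
    ¬ LinearIndependent K ![x, mul x x] ↔ ∃ l : K, mul x x = l • x := by
  by_cases hx : x = 0
  · subst hx
    refine iff_of_true (fun h => h.ne_zero 0 rfl) ⟨0, by simp⟩
  · rw [LinearIndependent.pair_iff' hx]
    push Not
    exact ⟨fun ⟨l, h⟩ => ⟨l, h.symm⟩, fun ⟨l, h⟩ => ⟨l, h.symm⟩⟩

lemma mul_eq_zero_of_squares_eq_zero (h2 : (2 : K) ≠ 0) (mul : A →ₗ[K] A →ₗ[K] A)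
    (comm : ∀ x y : A, mul x y = mul y x) {x y : A} (hx : mul x x = 0) (hy : mul y y = 0)
    (hxy : mul (x + y) (x + y) = 0) : mul x y = 0 := by
  have h : (2 : K) • mul x y = 0 := by
    simp only [map_add, LinearMap.add_apply, hx, hy, comm y x] at hxy
    rw [two_smul]
    simpa using hxy
  exact (smul_eq_zero.mp h).resolve_left h2

/-- If every square is a multiple of its root, left multiplication by an `a` with `a ∘ a = 2a`
is determined by the square multiplier `l` of its argument. -/
lemma mul_left_of_square_multiples (h2 : (2 : K) ≠ 0) (mul : A →ₗ[K] A →ₗ[K] A)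
    (comm : ∀ x y : A, mul x y = mul y x) (hsq : ∀ x : A, ∃ l : K, mul x x = l • x)
    {a : A} (ha0 : a ≠ 0) (ha : mul a a = (2 : K) • a) (x : A) :
    ∃ l : K, mul x x = l • x ∧ mul a x = x + (l / 2) • a := by
  by_cases hli : LinearIndependent K ![a, x]
  · obtain ⟨l, hl⟩ := hsq x
    obtain ⟨m, hm⟩ := hsq (a + x)
    obtain ⟨n, hn⟩ := hsq (a - x)
    refine ⟨l, hl, ?_⟩
    simp only [map_add, LinearMap.add_apply, ha, hl, comm x a] at hm
    simp only [map_sub, LinearMap.sub_apply, ha, hl, comm x a] at hn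
    rw [LinearIndependent.pair_iff] at hli
    -- The sum of the two squares involves no mixed product; compare coefficients of `a` and `x`.
    obtain ⟨e1, e2⟩ := hli (4 - m - n) (2 * l - m + n) (by
      linear_combination (norm := module) hm + hn)
    have e : m = 2 + l := mul_left_cancel₀ h2 (by linear_combination -e1 - e2)
    subst e
    refine smul_right_injective A h2 ?_
    have hs : (2 : K) • ((l / 2) • a) = l • a := by rw [smul_smul, mul_div_cancel₀ _ h2]
    simp only [smul_add, hs]
    linear_combination (norm := module) hm
  · rw [LinearIndependent.pair_iff' ha0] at hli
    push Not at hli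
    obtain ⟨c, rfl⟩ := hli
    refine ⟨2 * c, ?_, ?_⟩
    · simp only [map_smul, LinearMap.smul_apply, ha]
      module
    · rw [map_smul, ha, mul_div_cancel_left₀ _ h2]
      module

end


/-- For a commutative (possibly non-associative, non-unital) algebra `A`
over a field of characteristic `≠ 2, 3`, exactly one of the following holds:
(i) all products are zero;
(ii) `A = V ⊕ Ka` with `V ∘ V = 0`, `a ∘ x = x` for `x ∈ V`, and `a ∘ a = 2a`;
(iii) there is `x ∈ A` with `x` and `x ∘ x` linearly independent. -/
theorem comm_algebra_rank_two_trichotomy (K : Type*) [Field K]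
    (h2 : (2 : K) ≠ 0) (h3 : (3 : K) ≠ 0)
    {A : Type*} [AddCommGroup A] [Module K A]
    (mul : A →ₗ[K] A →ₗ[K] A)
    (comm : ∀ x y : A, mul x y = mul y x) :
    letI P : Prop := ∀ x y : A, mul x y = 0
    letI Q : Prop := ∃ (V : Submodule K A) (a : A), a ≠ 0 ∧ IsCompl V (K ∙ a) ∧
      (∀ x ∈ V, ∀ y ∈ V, mul x y = 0) ∧ (∀ x ∈ V, mul a x = x) ∧ mul a a = (2 : K) • a
    letI R : Prop := ∃ x : A, LinearIndependent K ![x, mul x x]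
    (P ∧ ¬Q ∧ ¬R) ∨ (¬P ∧ Q ∧ ¬R) ∨ (¬P ∧ ¬Q ∧ R) := by
  have hPQ : (∀ x y : A, mul x y = 0) → ¬ ∃ (V : Submodule K A) (a : A), a ≠ 0 ∧
      IsCompl V (K ∙ a) ∧ (∀ x ∈ V, ∀ y ∈ V, mul x y = 0) ∧ (∀ x ∈ V, mul a x = x) ∧
      mul a a = (2 : K) • a := by
    rintro hP ⟨V, a, ha0, -, -, -, ha⟩
    rw [hP] at ha
    exact (smul_ne_zero h2 ha0) ha.symm
  have hPR : (∀ x y : A, mul x y = 0) → ¬ ∃ x : A, LinearIndependent K ![x, mul x x] := by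
    rintro hP ⟨x, hx⟩
    exact (not_linearIndependent_square_iff mul x).mpr ⟨0, by simp [hP]⟩ hx
  have hQR : (∃ (V : Submodule K A) (a : A), a ≠ 0 ∧
      IsCompl V (K ∙ a) ∧ (∀ x ∈ V, ∀ y ∈ V, mul x y = 0) ∧ (∀ x ∈ V, mul a x = x) ∧
      mul a a = (2 : K) • a) → ¬ ∃ x : A, LinearIndependent K ![x, mul x x] := by
    rintro ⟨V, a, -, hc, hV, haV, ha⟩ ⟨x, hx⟩
    refine (not_linearIndependent_square_iff mul x).mpr ?_ hx
    obtain ⟨v, hv, w, hw, rfl⟩ := Submodule.mem_sup.mp (hc.sup_eq_top ▸ Submodule.mem_top (x := x))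
    obtain ⟨c, rfl⟩ := Submodule.mem_span_singleton.mp hw
    refine ⟨2 * c, ?_⟩
    simp only [map_add, map_smul, LinearMap.add_apply, LinearMap.smul_apply, hV v hv v hv,
      comm v a, haV v hv, ha]
    module
  have hor : (¬ ∃ x : A, LinearIndependent K ![x, mul x x]) → (¬ ∀ x y : A, mul x y = 0) →
      ∃ (V : Submodule K A) (a : A), a ≠ 0 ∧
      IsCompl V (K ∙ a) ∧ (∀ x ∈ V, ∀ y ∈ V, mul x y = 0) ∧ (∀ x ∈ V, mul a x = x) ∧
      mul a a = (2 : K) • a := by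
    intro hR hP
    have hsq : ∀ x : A, ∃ l : K, mul x x = l • x := fun x =>
      (not_linearIndependent_square_iff mul x).mp fun h => hR ⟨x, h⟩
    obtain ⟨b, hb⟩ : ∃ b : A, mul b b ≠ 0 := by
      by_contra! h
      exact hP fun x y => mul_eq_zero_of_squares_eq_zero h2 mul comm (h x) (h y) (h _)
    obtain ⟨a, ha0, ha⟩ : ∃ a : A, a ≠ 0 ∧ mul a a = (2 : K) • a := by
      obtain ⟨l, hl⟩ := hsq b
      have hl0 : l ≠ 0 := by rintro rfl; simp [hl] at hb
      have hb0 : b ≠ 0 := by rintro rfl; simp at hb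
      refine ⟨(2 / l) • b, smul_ne_zero (div_ne_zero h2 hl0) hb0, ?_⟩
      simp only [map_smul, LinearMap.smul_apply, hl, smul_smul]
      congr 1
      field_simp
    have key := mul_left_of_square_multiples h2 mul comm hsq ha0 ha
    let V : Submodule K A := LinearMap.ker (mul a - LinearMap.id)
    have memV : ∀ x, x ∈ V ↔ mul a x = x := fun x => by simp [V, sub_eq_zero]
    have sqV : ∀ x ∈ V, mul x x = 0 := by
      intro x hx
      obtain ⟨l, hl, h⟩ := key x
      rw [(memV x).mp hx, left_eq_add, smul_eq_zero] at h
      have hl0 : l = 0 := by simpa [h2] using h.resolve_right ha0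
      rw [hl, hl0, zero_smul]
    refine ⟨V, a, ha0, IsCompl.of_eq ?_ ?_, ?_, fun x hx => (memV x).mp hx, ha⟩
    · rw [Submodule.eq_bot_iff]
      rintro x ⟨hx, hxa⟩
      obtain ⟨c, rfl⟩ := Submodule.mem_span_singleton.mp hxa
      have h := (memV _).mp hx
      rw [map_smul, ha] at h
      linear_combination (norm := module) h
    · rw [Submodule.eq_top_iff']
      intro x
      obtain ⟨l, -, h⟩ := key x
      refine Submodule.mem_sup.mpr ⟨x - (l / 2) • a, ?_, (l / 2) • a,
        Submodule.smul_mem _ _ (Submodule.mem_span_singleton_self a), by abel⟩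
      rw [memV, map_sub, map_smul, h, ha]
      module
    · intro x hx y hy
      exact mul_eq_zero_of_squares_eq_zero h2 mul comm (sqV x hx) (sqV y hy)
        (sqV _ (V.add_mem hx hy))
  by_cases hP : ∀ x y : A, mul x y = 0
  · exact Or.inl ⟨hP, hPQ hP, hPR hP⟩
  · by_cases hR : ∃ x : A, LinearIndependent K ![x, mul x x]
    · exact Or.inr (Or.inr ⟨hP, fun hQ => hQR hQ hR, hR⟩)
    · exact Or.inr (Or.inl ⟨hP, hor hR hP, hR⟩)
end

section
/- Let L be a mock-Lie algebra over a field K of characteristic different from 2 and 3 with L^4 = 0. Then L is special: there exist an associative K-algebra A and an injective linear map φ: L → A with φ(x∘y) = (1/2)(φ(x)φ(y) + φ(y)φ(x)) for all x, y ∈ L. -/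
/-!
The enveloping algebra is built by hand. Let `N` be the space of linear maps `f : L → L` that kill
all products `x ∘ y` and take values in `L³`. For `x, y : L` the map
`D x y : a ↦ (x ∘ a) ∘ y - (a ∘ y) ∘ x` lies in `N`, because all products of four elements vanish:
those of the form `((a ∘ b) ∘ c) ∘ d` since `L⁴ = 0`, and those of the form `(a ∘ b) ∘ (c ∘ d)` since
the Jacobi identity expresses them through the former. On `L × N` put
`(x, f) (y, g) = (x ∘ y + g x - f y, D x y)`.
Here `D x y` plays the role of half the commutator `[x, y]`, and, once it is required to
anticommute with `L`, its action on `L` is forced by the identity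
`(x ∘ a) ∘ y - x ∘ (a ∘ y) = (1/4) [a, [x, y]]`, valid in every associative algebra. The
product is associative (`envMul_assoc`), and `D` is antisymmetric, so the symmetrization of the
product of `(x, 0)` and `(y, 0)` is `(x ∘ y, 0)`. Adjoining a unit (`exists_unital_envelope`) gives
the required associative algebra.
-/

universe u v

variable (K : Type u) [Field K] {L : Type v} [AddCommGroup L] [Module K L]

/-- A witness that the mock-Lie algebra `(L, mul)` is special: an associative
`K`-algebra `A` together with an injective linear map `φ : L → A` such that
`φ(x∘y) = (1/2)(φ(x)φ(y) + φ(y)φ(x))`. -/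
structure SpecialEmbedding (mul : L →ₗ[K] L →ₗ[K] L) :
    Type (max u v + 1) where
  A : Type (max u v)
  [ringA : Ring A]
  [algA : Algebra K A]
  φ : L →ₗ[K] A
  inj : Function.Injective φ
  hom : ∀ x y : L, φ (mul x y) = (1 / 2 : K) • (φ x * φ y + φ y * φ x)

/-- An associative bilinear product on a vector space is realized inside a unital algebra. -/
theorem exists_unital_envelope {V : Type v} [AddCommGroup V] [Module K V]
    (B : V →ₗ[K] V →ₗ[K] V) (assoc : ∀ p q r : V, B (B p q) r = B p (B q r)) :
    ∃ (A : Type (max u v)) (_ : Ring A) (_ : Algebra K A) (j : V →ₗ[K] A),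
      Function.Injective j ∧ ∀ p q, j (B p q) = j p * j q := by
  let _ : NonUnitalRing V :=
    { (inferInstance : AddCommGroup V) with
      mul := fun p q => B p q
      left_distrib := fun p q r => map_add (B p) q r
      right_distrib := fun p q r => LinearMap.map_add₂ B p q r
      zero_mul := fun p => LinearMap.map_zero₂ B p
      mul_zero := fun p => map_zero (B p)
      mul_assoc := assoc }
  have : IsScalarTower K V V := ⟨fun c p q => LinearMap.map_smul₂ B c p q⟩
  have : SMulCommClass K V V := ⟨fun c p q => (map_smul (B p) c q).symm⟩
  exact ⟨Unitization K V, inferInstance, inferInstance, Unitization.inrHom K K V,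
    Unitization.inr_injective, fun p q => Unitization.inr_mul K p q⟩

theorem mul_eq_zero_of_mem_lc_three {mul : L →ₗ[K] L →ₗ[K] L} (hnil : lc K mul 4 = ⊥)
    {z : L} (hz : z ∈ lc K mul 3) (w : L) : mul z w = 0 := by
  have h : mul z w ∈ lc K mul 4 := Submodule.subset_span ⟨z, hz, w, trivial, rfl⟩
  rwa [hnil, Submodule.mem_bot] at h

theorem mul_mul_mem_lc_three (mul : L →ₗ[K] L →ₗ[K] L) (a b c : L) :
    mul (mul a b) c ∈ lc K mul 3 :=
  Submodule.subset_span
    ⟨mul a b, Submodule.subset_span ⟨a, trivial, b, trivial, rfl⟩, c, trivial, rfl⟩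

/-- The space `N` of linear maps `L → L` that vanish on all products and take values in `L³`. -/
def innerMaps (mul : L →ₗ[K] L →ₗ[K] L) : Submodule K (L →ₗ[K] L) where
  carrier := {f | (∀ x y, f (mul x y) = 0) ∧ ∀ x, f x ∈ lc K mul 3}
  zero_mem' := ⟨fun _ _ => rfl, fun _ => Submodule.zero_mem _⟩
  add_mem' := fun hf hg =>
    ⟨fun x y => by simp [hf.1 x y, hg.1 x y], fun x => Submodule.add_mem _ (hf.2 x) (hg.2 x)⟩
  smul_mem' := fun c _ hf =>
    ⟨fun x y => by simp [hf.1 x y], fun x => Submodule.smul_mem _ c (hf.2 x)⟩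

theorem innerMaps_apply_lc_three {mul : L →ₗ[K] L →ₗ[K] L} (f : innerMaps K mul)
    {z : L} (hz : z ∈ lc K mul 3) : f.1 z = 0 := by
  have h : lc K mul 3 ≤ LinearMap.ker f.1 := by
    refine Submodule.span_le.2 ?_
    rintro _ ⟨v, -, w, -, rfl⟩
    exact f.2.1 v w
  exact h hz

/-- Products of the shape `(a ∘ b) ∘ (c ∘ d)` vanish: the Jacobi identity for `a ∘ b`, `c`, `d`
writes them as a sum of elements of `L⁴`. -/
theorem mul_mul_mul_eq_zero {mul : L →ₗ[K] L →ₗ[K] L}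
    (comm : ∀ x y : L, mul x y = mul y x)
    (jacobi : ∀ x y z : L, mul (mul x y) z + mul (mul z x) y + mul (mul y z) x = 0)
    (hnil : lc K mul 4 = ⊥) (a b c d : L) : mul (mul a b) (mul c d) = 0 := by
  have h := jacobi (mul a b) c d
  rw [comm d (mul a b), comm (mul c d),
    mul_eq_zero_of_mem_lc_three K hnil (mul_mul_mem_lc_three K mul a b c),
    mul_eq_zero_of_mem_lc_three K hnil (mul_mul_mem_lc_three K mul a b d)] at h
  simpa using h

/-- The map `D x y : a ↦ (x ∘ a) ∘ y - (a ∘ y) ∘ x`, which plays the role of half the commutator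
of `x` and `y`. -/
def innerMap (mul : L →ₗ[K] L →ₗ[K] L) (comm : ∀ x y : L, mul x y = mul y x)
    (hnil : lc K mul 4 = ⊥) (x y : L) : innerMaps K mul :=
  ⟨mul.flip y ∘ₗ mul x - mul.flip x ∘ₗ mul.flip y, by
    refine ⟨fun a b => ?_, fun a => ?_⟩
    · have h1 := mul_eq_zero_of_mem_lc_three K hnil (mul_mul_mem_lc_three K mul a b x) y
      have h2 := mul_eq_zero_of_mem_lc_three K hnil (mul_mul_mem_lc_three K mul a b y) x
      simp [comm x (mul a b), h1, h2]
    · exact Submodule.sub_mem _ (mul_mul_mem_lc_three K mul x a y)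
        (mul_mul_mem_lc_three K mul a y x)⟩

theorem innerMap_apply (mul : L →ₗ[K] L →ₗ[K] L) (comm : ∀ x y : L, mul x y = mul y x)
    (hnil : lc K mul 4 = ⊥) (x y a : L) :
    (innerMap K mul comm hnil x y).1 a = mul (mul x a) y - mul (mul a y) x := rfl

/-- The product `(x, f) (y, g) = (x ∘ y + g x - f y, D x y)` on `L × N`. -/
def envMul (mul : L →ₗ[K] L →ₗ[K] L) (comm : ∀ x y : L, mul x y = mul y x)
    (hnil : lc K mul 4 = ⊥) :
    (L × innerMaps K mul) →ₗ[K] (L × innerMaps K mul) →ₗ[K] (L × innerMaps K mul) :=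
  LinearMap.mk₂ K
    (fun p q => (mul p.1 q.1 + q.2.1 p.1 - p.2.1 q.1, innerMap K mul comm hnil p.1 q.1))
    (fun p p' q => by
      refine Prod.ext ?_ (Subtype.ext (LinearMap.ext fun a => ?_))
      · simp; abel
      · simp [innerMap_apply]; abel)
    (fun c p q => by
      refine Prod.ext ?_ (Subtype.ext (LinearMap.ext fun a => ?_))
      · simp [smul_sub, smul_add]
      · simp [innerMap_apply, smul_sub])
    (fun p q q' => by
      refine Prod.ext ?_ (Subtype.ext (LinearMap.ext fun a => ?_))
      · simp; abel
      · simp [innerMap_apply]; abel)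
    (fun c p q => by
      refine Prod.ext ?_ (Subtype.ext (LinearMap.ext fun a => ?_))
      · simp [smul_sub, smul_add]
      · simp [innerMap_apply, smul_sub])

theorem envMul_apply (mul : L →ₗ[K] L →ₗ[K] L) (comm : ∀ x y : L, mul x y = mul y x)
    (hnil : lc K mul 4 = ⊥) (p q : L × innerMaps K mul) :
    envMul K mul comm hnil p q =
      (mul p.1 q.1 + q.2.1 p.1 - p.2.1 q.1, innerMap K mul comm hnil p.1 q.1) := rfl

/-- In the first component, all terms containing an element of `N` vanish, and what remains is
`(x ∘ y) ∘ z - D x y z = x ∘ (y ∘ z) + D y z x`, which follows from commutativity of `∘`. In the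
second component both sides vanish, since `D x y = 0` as soon as `x` or `y` lies in `L²`. -/
theorem envMul_assoc (mul : L →ₗ[K] L →ₗ[K] L) (comm : ∀ x y : L, mul x y = mul y x)
    (jacobi : ∀ x y z : L, mul (mul x y) z + mul (mul z x) y + mul (mul y z) x = 0)
    (hnil : lc K mul 4 = ⊥) (p q r : L × innerMaps K mul) :
    envMul K mul comm hnil (envMul K mul comm hnil p q) r =
      envMul K mul comm hnil p (envMul K mul comm hnil q r) := by
  obtain ⟨x, f⟩ := p
  obtain ⟨y, g⟩ := q
  obtain ⟨z, h⟩ := r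
  have h22 := mul_mul_mul_eq_zero K comm jacobi hnil
  have h31 : ∀ a b c d : L, mul (mul (mul a b) c) d = 0 := fun a b c d =>
    mul_eq_zero_of_mem_lc_three K hnil (mul_mul_mem_lc_three K mul a b c) d
  have hN : ∀ (k : innerMaps K mul) (a b : L), mul (k.1 a) b = 0 := fun k a b =>
    mul_eq_zero_of_mem_lc_three K hnil (k.2.2 a) b
  have hN' : ∀ (k : innerMaps K mul) (a b : L), mul b (k.1 a) = 0 := fun k a b => by
    rw [comm, hN]
  have hNN : ∀ (k l : innerMaps K mul) (a : L), k.1 (l.1 a) = 0 := fun k l a =>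
    innerMaps_apply_lc_three K k (l.2.2 a)
  have hNm : ∀ (k : innerMaps K mul) (a b : L), k.1 (mul a b) = 0 := fun k => k.2.1
  simp only [envMul_apply]
  refine Prod.ext ?_ (Subtype.ext (LinearMap.ext fun a => ?_))
  · simp only [map_add, map_sub, LinearMap.add_apply, LinearMap.sub_apply, hN, hN', hNN, hNm,
      innerMap_apply]
    rw [comm y x, comm z y, comm x (mul y z)]
    abel
  · simp only [innerMap_apply, map_add, map_sub, LinearMap.add_apply, LinearMap.sub_apply, hN, hN',
      h31, h22, LinearMap.zero_apply, map_zero]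
    rw [comm a (mul y z), h31]

/-- a mock-Lie algebra over a field of characteristic `≠ 2, 3` with
`L⁴ = 0` is special. -/
theorem special_of_lcs_four_eq_bot (h2 : (2 : K) ≠ 0) (h3 : (3 : K) ≠ 0)
    (mul : L →ₗ[K] L →ₗ[K] L)
    (comm : ∀ x y : L, mul x y = mul y x)
    (jacobi : ∀ x y z : L, mul (mul x y) z + mul (mul z x) y + mul (mul y z) x = 0)
    (hnil : lc K mul 4 = ⊥) :
    Nonempty (SpecialEmbedding K mul) := by
  obtain ⟨A, _, _, j, hj, hmul⟩ :=
    exists_unital_envelope K (envMul K mul comm hnil) (envMul_assoc K mul comm jacobi hnil)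
  refine ⟨⟨A, j ∘ₗ LinearMap.inl K L (innerMaps K mul), hj.comp LinearMap.inl_injective,
    fun x y => ?_⟩⟩
  simp only [LinearMap.comp_apply, ← hmul, ← map_add, ← map_smul]
  congr 1
  refine Prod.ext ?_ (Subtype.ext (LinearMap.ext fun a => ?_))
  · have : mul x y = (1 / 2 : K) • (mul x y + mul y x) := by
      rw [comm y x, ← two_smul K (mul x y), smul_smul, one_div, inv_mul_cancel₀ h2, one_smul]
    simpa [envMul_apply] using this
  · simp [envMul_apply, innerMap_apply, comm a y, comm a x]
    rw [← smul_add, sub_add_sub_cancel, sub_self, smul_zero]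
end

section
/- Every mock-Lie algebra L of dimension at most 6 over an algebraically closed field K of characteristic different from 2 and 3 is special: there exist an associative K-algebra A and an injective linear map φ: L → A with φ(x∘y) = (1/2)(φ(x)φ(y) + φ(y)φ(x)) for all x, y ∈ L. -/
/-!
Every mock-Lie algebra of dimension at most 6 has vanishing fourth power, that is
`x ∘ (y ∘ (z ∘ w)) = 0`, and a mock-Lie algebra with vanishing fourth power is special.

*Vanishing of the fourth power.* The Jacobi identity says `L_{x∘y} = -(L_x L_y + L_y L_x)` for the
multiplication operators, and it implies `L_x ^ 3 = 0`. If `p = b ∘ (b ∘ a²)` is nonzero for some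
`a`, `b`, then all products of degree 5 in `a`, `b` vanish, and multiplying a linear relation by
suitable operators shows that `a, b, a², a∘b, b², b∘a², p` are linearly independent
(`seven_le_of_two_gen`). So in dimension at most 6 we have `x ∘ (x ∘ y²) = 0` identically; then
multiplication operators anticommute on `L²`. If now `q = a ∘ (b ∘ (a ∘ c))` is nonzero, the elements
`a, b, c, a², a∘b, a∘c, q` are linearly independent for the same kind of reason
(`seven_le_of_three_gen`). So `a ∘ (b ∘ (a ∘ c)) = 0` identically as well, and these two identities
force the fourth power to vanish (`fourth_power_eq_zero`).

*Specialness.* When the fourth power vanishes, an associative product of three elements of `L` can be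
defined by `x y t = -2 (x ∘ t) ∘ y`. The corresponding left module is `K × L × P`, where `P` is a
space of endomorphisms of `L` containing all commutators `[L_x, L_y]`; an element `x` of `L` acts by
`1 ↦ x`, `y ↦ x ∘ y + [L_x, L_y]`, `D ↦ -D x`. The image of `1` shows that this action is faithful
(`special_of_fourth_power_eq_zero`).
-/

universe u v

variable (K : Type u) [Field K] {L : Type v} [AddCommGroup L] [Module K L]

set_option linter.unusedSimpArgs false

section MockLie

variable {K} {m : L →ₗ[K] L →ₗ[K] L}

/-! ### Identities in mock-Lie algebras -/

theorem jacobi_left (comm : ∀ x y : L, m x y = m y x)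
    (jacobi : ∀ x y z : L, m (m x y) z + m (m z x) y + m (m y z) x = 0) (x y z : L) :
    m x (m y z) + m y (m z x) + m z (m x y) = 0 := by
  have h := jacobi x y z
  rw [comm (m x y) z, comm (m z x) y, comm (m y z) x] at h
  linear_combination (norm := module) h

theorem mul_sq (h2 : (2 : K) ≠ 0) (comm : ∀ x y : L, m x y = m y x)
    (jacobi : ∀ x y z : L, m (m x y) z + m (m z x) y + m (m y z) x = 0) (x y : L) :
    m x (m x y) = -(2⁻¹ : K) • m y (m x x) := by
  have h := jacobi_left comm jacobi x x y
  rw [comm y x] at h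
  have h' : (2 : K) • m x (m x y) = -m y (m x x) := by
    linear_combination (norm := module) h
  rw [neg_smul, ← smul_neg, ← h', smul_smul, inv_mul_cancel₀ h2, one_smul]

theorem mul_mul_self_eq_zero (h3 : (3 : K) ≠ 0) (comm : ∀ x y : L, m x y = m y x)
    (jacobi : ∀ x y z : L, m (m x y) z + m (m z x) y + m (m y z) x = 0) (x : L) :
    m x (m x x) = 0 := by
  have h := jacobi_left comm jacobi x x x
  have h' : (3 : K) • m x (m x x) = 0 := by linear_combination (norm := module) h
  exact (smul_eq_zero.1 h').resolve_left h3

/-- The cube of a multiplication operator vanishes: expand `L_{x²∘x} = 0`. -/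
theorem mul_left_cube (h2 : (2 : K) ≠ 0) (h3 : (3 : K) ≠ 0) (comm : ∀ x y : L, m x y = m y x)
    (jacobi : ∀ x y z : L, m (m x y) z + m (m z x) y + m (m y z) x = 0) (x w : L) :
    m x (m x (m x w)) = 0 := by
  have e1 := jacobi_left comm jacobi (m x x) x w
  have e2 := jacobi_left comm jacobi x x (m x w)
  have e3 := congrArg (m x) (jacobi_left comm jacobi x x w)
  rw [comm (m x x) x, mul_mul_self_eq_zero h3 comm jacobi, comm w (m x x)] at e1
  rw [comm (m x w) x, comm (m x w) (m x x)] at e2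
  rw [comm w x, comm w (m x x)] at e3
  simp only [map_add, map_zero] at e1 e2 e3
  have h' : (2 * 2 : K) • m x (m x (m x w)) = 0 := by
    linear_combination (norm := module) e2 + e3 - e1
  exact (smul_eq_zero.1 h').resolve_left (mul_ne_zero h2 h2)

/-- Both sides are equal to `-½ x² ∘ y²`. -/
theorem sq_symm (h2 : (2 : K) ≠ 0) (comm : ∀ x y : L, m x y = m y x)
    (jacobi : ∀ x y z : L, m (m x y) z + m (m z x) y + m (m y z) x = 0) (x y : L) :
    m x (m x (m y y)) = m y (m y (m x x)) := by
  rw [mul_sq h2 comm jacobi x, mul_sq h2 comm jacobi y, comm]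

/-! ### Products of degree four in two generators -/

theorem seven_le_of_two_gen (h2 : (2 : K) ≠ 0) (h3 : (3 : K) ≠ 0)
    [FiniteDimensional K L] (comm : ∀ x y : L, m x y = m y x)
    (jacobi : ∀ x y z : L, m (m x y) z + m (m z x) y + m (m y z) x = 0) (a b : L)
    (hp : m b (m b (m a a)) ≠ 0) : 7 ≤ Module.finrank K L := by
  have z1 := mul_mul_self_eq_zero h3 comm jacobi
  have cube := mul_left_cube h2 h3 comm jacobi
  -- The multiplication table of `a` and `b` on the monomials of degree at least two.
  have ha_ab : m a (m a b) = -(2⁻¹ : K) • m b (m a a) := mul_sq h2 comm jacobi a b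
  have hb_ab : m b (m a b) = -(2⁻¹ : K) • m a (m b b) := by
    rw [comm a b]; exact mul_sq h2 comm jacobi b a
  have ha_t : m a (m a (m b b)) = m b (m b (m a a)) := sq_symm h2 comm jacobi a b
  have hi : (-(2⁻¹ : K)) ≠ 0 := neg_ne_zero.2 (inv_ne_zero h2)
  have ha_6 : m a (m b (m a a)) = 0 := by
    have h := cube a b
    rw [ha_ab, map_smul] at h
    exact (smul_eq_zero.1 h).resolve_left hi
  have hb_t : m b (m a (m b b)) = 0 := by
    have h := cube b a
    rw [comm b a, hb_ab, map_smul] at h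
    exact (smul_eq_zero.1 h).resolve_left hi
  have ha_7 : m a (m b (m b (m a a))) = 0 := by rw [← ha_t, cube]
  have hb_7 : m b (m b (m b (m a a))) = 0 := cube b _
  have hli : LinearIndependent K
      ![a, b, m a a, m a b, m b b, m b (m a a), m b (m b (m a a))] := by
    rw [Fintype.linearIndependent_iff]
    intro g hg
    simp only [Fin.sum_univ_seven, Matrix.cons_val] at hg
    have res : ∀ c : K, c • m b (m b (m a a)) = 0 → c = 0 :=
      fun c hc => (smul_eq_zero.1 hc).resolve_right hp
    -- Each coefficient is isolated by an operator carrying its monomial to a multiple of `p`.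
    have g0 : g 0 = 0 := by
      have h := congrArg (fun r => m b (m b (m a r))) hg
      simp only [map_add, map_smul, map_zero, ha_ab, hb_ab, ha_t, ha_6, hb_t, ha_7, hb_7, z1,
        smul_zero, add_zero, zero_add] at h
      exact res _ h
    have g1 : g 1 = 0 := by
      have h := congrArg (fun r => m a (m a (m b r))) hg
      simp only [map_add, map_smul, map_zero, comm b a, ha_ab, hb_ab, ha_t, ha_6, hb_t, ha_7, hb_7,
        z1, smul_zero, add_zero, zero_add] at h
      exact res _ h
    simp only [g0, g1, zero_smul, zero_add] at hg
    have g2 : g 2 = 0 := by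
      have h := congrArg (fun r => m b (m b r)) hg
      simp only [map_add, map_smul, map_zero, ha_ab, hb_ab, ha_t, ha_6, hb_t, ha_7, hb_7, z1,
        smul_zero, add_zero, zero_add] at h
      exact res _ h
    have g4 : g 4 = 0 := by
      have h := congrArg (fun r => m a (m a r)) hg
      simp only [map_add, map_smul, map_zero, ha_ab, hb_ab, ha_t, ha_6, hb_t, ha_7, hb_7, z1,
        smul_zero, add_zero, zero_add] at h
      exact res _ h
    simp only [g2, g4, zero_smul, zero_add] at hg
    have g3 : g 3 = 0 := by
      have h := congrArg (fun r => m a (m b r)) hg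
      simp only [map_add, map_smul, map_zero, ha_ab, hb_ab, ha_t, ha_6, hb_t, ha_7, hb_7, z1,
        smul_zero, add_zero, zero_add, smul_smul] at h
      exact (mul_eq_zero.1 (res _ h)).resolve_right hi
    simp only [g3, zero_smul, zero_add] at hg
    have g5 : g 5 = 0 := by
      have h := congrArg (fun r => m b r) hg
      simp only [map_add, map_smul, map_zero, hb_7, smul_zero, add_zero] at h
      exact res _ h
    simp only [g5, zero_smul, zero_add] at hg
    have g6 := res _ hg
    intro i
    fin_cases i <;> assumption
  simpa using hli.fintype_card_le_finrank

/-! ### Products of degree four in three generators -/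

theorem mul_mul_mul_self_eq_zero (h2 : (2 : K) ≠ 0) (comm : ∀ x y : L, m x y = m y x)
    (hsq : ∀ x y : L, m x (m x (m y y)) = 0) (x y z : L) : m x (m x (m y z)) = 0 := by
  have h := hsq x (y + z)
  simp only [map_add, LinearMap.add_apply, hsq, comm z y] at h
  have h' : (2 : K) • m x (m x (m y z)) = 0 := by linear_combination (norm := module) h
  exact (smul_eq_zero.1 h').resolve_left h2

/-- If `x ∘ (x ∘ y²) = 0` identically, the multiplication operators anticommute on `L²`. -/
theorem anticomm_on_sq (h2 : (2 : K) ≠ 0) (comm : ∀ x y : L, m x y = m y x)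
    (hsq : ∀ x y : L, m x (m x (m y y)) = 0) (x y z w : L) :
    m x (m y (m z w)) = -m y (m x (m z w)) := by
  have n := mul_mul_mul_self_eq_zero h2 comm hsq
  have h := n (x + y) z w
  simp only [map_add, LinearMap.add_apply, n] at h
  linear_combination (norm := module) h

theorem seven_le_of_three_gen (h2 : (2 : K) ≠ 0) (h3 : (3 : K) ≠ 0)
    [FiniteDimensional K L] (comm : ∀ x y : L, m x y = m y x)
    (jacobi : ∀ x y z : L, m (m x y) z + m (m z x) y + m (m y z) x = 0)
    (hsq : ∀ x y : L, m x (m x (m y y)) = 0) (a b c : L)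
    (hq : m a (m b (m a c)) ≠ 0) : 7 ≤ Module.finrank K L := by
  have z1 := mul_mul_self_eq_zero h3 comm jacobi
  have n1 := mul_mul_mul_self_eq_zero h2 comm hsq
  have n2 := anticomm_on_sq h2 comm hsq
  have sq := mul_sq h2 comm jacobi
  have t0 : ∀ x y : L, m x (m y (m x x)) = 0 := fun x y => by
    rw [n2, z1, map_zero, neg_zero]
  have t1 : ∀ x y : L, m y (m x (m x y)) = 0 := fun x y => by
    rw [sq, map_smul, n1, smul_zero]
  have t2 : ∀ x y : L, m x (m y (m x y)) = 0 := fun x y => by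
    rw [n2, t1, neg_zero]
  have hac_b : m a (m c (m a b)) = -m a (m b (m a c)) := by
    have h := congrArg (m a) (jacobi_left comm jacobi a b c)
    simp only [map_add, map_zero, n1, comm c a] at h
    linear_combination (norm := module) h
  have hbc_a : m b (m c (m a a)) = (2 : K) • m a (m b (m a c)) := by
    have h := congrArg (m b) (jacobi_left comm jacobi a a c)
    simp only [map_add, map_zero, comm c a] at h
    rw [n2 b a] at h
    linear_combination (norm := module) h
  have hbc_ab : m b (m c (m a (m a b))) = 0 := by
    rw [sq, map_smul, n2 c b, map_smul, map_neg, n1, neg_zero, smul_zero]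
  have hbc_ac : m b (m c (m a (m a c))) = 0 := by
    rw [sq, map_smul, n1, smul_zero, map_zero]
  have hab_ac : m a (m b (m a (m a c))) = 0 := by
    rw [n2 b a, map_neg, n1, neg_zero]
  have hac_ab : m a (m c (m a (m a b))) = 0 := by
    rw [n2 c a, map_neg, n1, neg_zero]
  have haq : m a (m a (m b (m a c))) = 0 := n1 _ _ _
  have hbq : m b (m a (m b (m a c))) = 0 := by
    rw [n2 b a, n1, map_zero, neg_zero]
  have hcq : m c (m a (m b (m a c))) = 0 := by
    rw [n2 c a, n2 c b, comm a c, sq c a, map_neg, map_smul, n2 b a]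
    simp only [map_neg, map_smul, n1, neg_zero, smul_zero]
  have hli : LinearIndependent K
      ![a, b, c, m a a, m a b, m a c, m a (m b (m a c))] := by
    rw [Fintype.linearIndependent_iff]
    intro g hg
    simp only [Fin.sum_univ_seven, Matrix.cons_val] at hg
    have res : ∀ k : K, k • m a (m b (m a c)) = 0 → k = 0 :=
      fun k hk => (smul_eq_zero.1 hk).resolve_right hq
    -- Each coefficient is isolated by an operator carrying its monomial to a multiple of `q`.
    have g2 : g 2 = 0 := by
      have h := congrArg (fun r => m a (m b (m a r))) hg
      simp only [map_add, map_smul, map_zero, z1, t0, t1, t2, hab_ac, haq,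
        smul_zero, add_zero, zero_add] at h
      exact res _ h
    have g1 : g 1 = 0 := by
      have h := congrArg (fun r => m a (m c (m a r))) hg
      simp only [map_add, map_smul, map_zero, z1, t0, t1, t2, hac_ab, haq, hac_b,
        smul_zero, add_zero, zero_add, smul_neg, neg_eq_zero] at h
      exact res _ h
    simp only [g1, g2, zero_smul, add_zero] at hg
    have g0 : g 0 = 0 := by
      have h := congrArg (fun r => m b (m c (m a r))) hg
      simp only [map_add, map_smul, map_zero, z1, hbc_a, hbc_ab, hbc_ac, haq,
        smul_zero, add_zero, smul_smul] at h
      exact (mul_eq_zero.1 (res _ h)).resolve_right h2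
    simp only [g0, zero_smul, zero_add] at hg
    have g5 : g 5 = 0 := by
      have h := congrArg (fun r => m a (m b r)) hg
      simp only [map_add, map_smul, map_zero, t0, t2, hbq,
        smul_zero, add_zero, zero_add] at h
      exact res _ h
    have g4 : g 4 = 0 := by
      have h := congrArg (fun r => m a (m c r)) hg
      simp only [map_add, map_smul, map_zero, t0, t2, hcq, hac_b,
        smul_zero, add_zero, zero_add, smul_neg, neg_eq_zero] at h
      exact res _ h
    simp only [g4, g5, zero_smul, add_zero] at hg
    have g3 : g 3 = 0 := by
      have h := congrArg (fun r => m b (m c r)) hg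
      simp only [map_add, map_smul, map_zero, hbc_a, hcq,
        smul_zero, add_zero, smul_smul] at h
      exact (mul_eq_zero.1 (res _ h)).resolve_right h2
    simp only [g3, zero_smul, zero_add] at hg
    have g6 := res _ hg
    intro i
    fin_cases i <;> assumption
  simpa using hli.fintype_card_le_finrank

theorem fourth_power_eq_zero (h2 : (2 : K) ≠ 0) (h3 : (3 : K) ≠ 0)
    [FiniteDimensional K L] (hdim : Module.finrank K L ≤ 6)
    (comm : ∀ x y : L, m x y = m y x)
    (jacobi : ∀ x y z : L, m (m x y) z + m (m z x) y + m (m y z) x = 0) (x y z w : L) :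
    m x (m y (m z w)) = 0 := by
  have hsq : ∀ x y : L, m x (m x (m y y)) = 0 := fun x y => by
    by_contra h
    have := seven_le_of_two_gen h2 h3 comm jacobi y x h
    omega
  have hq : ∀ a b c : L, m a (m b (m a c)) = 0 := fun a b c => by
    by_contra h
    have := seven_le_of_three_gen h2 h3 comm jacobi hsq a b c h
    omega
  have hs : ∀ x y z : L, m x (m y (m z z)) = 0 := fun x y z => by
    have h := congrArg (m x) (jacobi_left comm jacobi z z y)
    simp only [map_add, map_zero, comm y z, anticomm_on_sq h2 comm hsq x z, hq] at h
    linear_combination (norm := module) h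
  -- Polarize `x ∘ (y ∘ z²) = 0` in `z`.
  have h := hs x y (z + w)
  simp only [map_add, LinearMap.add_apply, hs, comm w z] at h
  have h' : (2 : K) • m x (m y (m z w)) = 0 := by linear_combination (norm := module) h
  exact (smul_eq_zero.1 h').resolve_left h2

/-! ### Algebras with vanishing fourth power -/

/-- The endomorphisms of `L` that vanish on `L²` and take values in the annihilator of `L`. -/
def annEnd (m : L →ₗ[K] L →ₗ[K] L) : Submodule K (Module.End K L) where
  carrier := {D | (∀ x y, D (m x y) = 0) ∧ ∀ x y, m (D x) y = 0}
  add_mem' := fun hD hE =>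
    ⟨fun x y => by simp [hD.1, hE.1], fun x y => by simp [hD.2, hE.2]⟩
  zero_mem' := by simp
  smul_mem' := fun k D hD => ⟨fun x y => by simp [hD.1], fun x y => by simp [hD.2]⟩

theorem sq_mul_sq_eq_zero (comm : ∀ x y : L, m x y = m y x)
    (jacobi : ∀ x y z : L, m (m x y) z + m (m z x) y + m (m y z) x = 0)
    (h4 : ∀ x y z w : L, m x (m y (m z w)) = 0) (x y z w : L) : m (m x y) (m z w) = 0 := by
  have h := jacobi_left comm jacobi x y (m z w)
  rw [h4, comm (m z w) x, h4, comm (m z w), zero_add, zero_add] at h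
  exact h

theorem commutator_mem_annEnd (comm : ∀ x y : L, m x y = m y x)
    (h4 : ∀ x y z w : L, m x (m y (m z w)) = 0) (x y : L) :
    m x ∘ₗ m y - m y ∘ₗ m x ∈ annEnd m := by
  refine ⟨fun z w => by simp [h4], fun z w => ?_⟩
  rw [comm]
  simp [h4]

/-- The commutator `(x, y) ↦ [L_x, L_y]` of multiplication operators, when the fourth power
vanishes. -/
def commutatorMap (comm : ∀ x y : L, m x y = m y x)
    (h4 : ∀ x y z w : L, m x (m y (m z w)) = 0) : L →ₗ[K] L →ₗ[K] annEnd m :=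
  LinearMap.mk₂ K
    (fun x y => ⟨m x ∘ₗ m y - m y ∘ₗ m x, commutator_mem_annEnd comm h4 x y⟩)
    (fun x x' y => by ext t; simp; abel)
    (fun k x y => by ext t; simp [smul_sub])
    (fun x y y' => by ext t; simp; abel)
    (fun k x y => by ext t; simp [smul_sub])

/-- The action of `L` on `K × L × annEnd m` given by `1 ↦ x`, `y ↦ x ∘ y + [L_x, L_y]`,
`D ↦ -D x`. -/
def envelope (comm : ∀ x y : L, m x y = m y x)
    (h4 : ∀ x y z w : L, m x (m y (m z w)) = 0) :
    L →ₗ[K] Module.End K (K × L × annEnd m) :=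
  LinearMap.mk₂ K
    (fun x v => (0, v.1 • x + m x v.2.1 - v.2.2.1 x, commutatorMap comm h4 x v.2.1))
    (fun x x' v => by
      refine Prod.ext (by simp) (Prod.ext ?_ (by simp))
      simp only [map_add, LinearMap.add_apply, Prod.snd_add, Prod.fst_add]; module)
    (fun k x v => by
      refine Prod.ext (by simp) (Prod.ext ?_ (by simp))
      simp only [map_smul, LinearMap.smul_apply, Prod.smul_snd, Prod.smul_fst]; module)
    (fun x v v' => by
      refine Prod.ext (by simp) (Prod.ext ?_ (by simp))
      simp only [map_add, LinearMap.add_apply, Prod.snd_add, Prod.fst_add, Submodule.coe_add]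
      module)
    (fun k x v => by
      refine Prod.ext (by simp) (Prod.ext ?_ (by simp))
      simp only [map_smul, LinearMap.smul_apply, Prod.smul_snd, Prod.smul_fst, Submodule.coe_smul,
        smul_eq_mul]
      module)

theorem special_of_fourth_power_eq_zero (h2 : (2 : K) ≠ 0) (comm : ∀ x y : L, m x y = m y x)
    (jacobi : ∀ x y z : L, m (m x y) z + m (m z x) y + m (m y z) x = 0)
    (h4 : ∀ x y z w : L, m x (m y (m z w)) = 0) : Nonempty (SpecialEmbedding K m) := by
  have hval : ∀ x v, envelope comm h4 x v =
      (0, v.1 • x + m x v.2.1 - v.2.2.1 x, commutatorMap comm h4 x v.2.1) :=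
    fun _ _ => rfl
  have hcomm : ∀ x y t : L,
      (commutatorMap comm h4 x y).1 t = m x (m y t) - m y (m x t) := fun _ _ _ => rfl
  have hskew : ∀ x y, commutatorMap comm h4 x y = -commutatorMap comm h4 y x := fun x y => by
    ext t
    simp [hcomm]
  have hcomm_sq : ∀ x y z, commutatorMap comm h4 x (m y z) = 0 := fun x y z => by
    ext t
    rw [hcomm, sq_mul_sq_eq_zero comm jacobi h4, comm (m y z) t, h4]
    simp
  have hsq_comm : ∀ x y z, commutatorMap comm h4 (m y z) x = 0 := fun x y z => by
    rw [hskew, hcomm_sq, neg_zero]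
  have hcomm_D : ∀ D : Module.End K L, (∀ x y, m (D x) y = 0) →
      ∀ x y, commutatorMap comm h4 x (D y) = 0 := fun D hD x y => by
    ext t
    rw [hcomm, hD, hD]
    simp
  refine ⟨{ A := Module.End K (K × L × annEnd m)
            φ := envelope comm h4
            inj := ?_
            hom := ?_ }⟩
  · intro x y h
    have h' := congrArg (fun f => (f ((1 : K), (0 : L), (0 : annEnd m))).2.1) h
    simpa [hval] using h'
  · intro x y
    have key : (2 : K) • envelope comm h4 (m x y) =
        envelope comm h4 x * envelope comm h4 y +
          envelope comm h4 y * envelope comm h4 x := by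
      refine LinearMap.ext fun v => ?_
      obtain ⟨k, l, D, hD1, hD2⟩ := v
      have hD2' : ∀ s t, m s (D t) = 0 := fun s t => by rw [comm, hD2]
      simp only [LinearMap.smul_apply, LinearMap.add_apply, Module.End.mul_apply, hval,
        Prod.smul_mk, Prod.mk_add_mk]
      refine Prod.ext (by simp) (Prod.ext ?_ ?_)
      · simp only [hcomm, map_add, map_sub, map_smul, hD1, hD2', zero_smul, comm y x, comm l]
        rw [comm (m x y) l]
        module
      · simp only [map_add, map_sub, map_smul, hcomm_sq, hcomm_D _ hD2, hsq_comm, hskew y x]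
        module
    rw [← key, smul_smul, one_div, inv_mul_cancel₀ h2, one_smul]

end MockLie

/-- every mock-Lie algebra of dimension at most 6 over an algebraically
closed field of characteristic `≠ 2, 3` is special. -/
theorem special_of_dim_le_six [IsAlgClosed K]
    (h2 : (2 : K) ≠ 0) (h3 : (3 : K) ≠ 0)
    [FiniteDimensional K L] (hdim : Module.finrank K L ≤ 6)
    (mul : L →ₗ[K] L →ₗ[K] L)
    (comm : ∀ x y : L, mul x y = mul y x)
    (jacobi : ∀ x y z : L, mul (mul x y) z + mul (mul z x) y + mul (mul y z) x = 0) :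
    Nonempty (SpecialEmbedding K mul) := by
  exact special_of_fourth_power_eq_zero h2 comm jacobi
    (fourth_power_eq_zero h2 h3 hdim comm jacobi)
end

section
/- Let L be a mock-Lie algebra over a field K of characteristic different from 2 and 3, let V be an L-module with representation ρ: L → End(V), and let D: L → V be an antiderivation of L with values in V such that Ker D = 0. Then L has a faithful representation, namely the natural action of L on the space V ⊕ Der₋₁(L,V), given on the first summand by ρ and on the second summand by x · d = d(x). -/
/-!
Each operator `σ x` sends `(v, d)` to `(ρ x v + d x, 0)`, so `σ x (σ y (v, d))` has first
component `ρ x (ρ y v) + ρ x (d y)` and the representation identity for `σ` splits into the one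
for `ρ` (coefficient of `v`) and the antiderivation identity for `d`. The action is faithful
because `σ x (0, D) = (D x, 0)` and `D` is injective.
-/

variable (K : Type*) [Field K] {L : Type*} [AddCommGroup L] [Module K L]
  {V : Type*} [AddCommGroup V] [Module K V]

/-- The space `Der₋₁(L, V)` of antiderivations of `L` with values in the `L`-module
`V` (with representation `ρ`): linear maps `D : L → V` with
`D(x∘y) = -ρ(y)D(x) - ρ(x)D(y)`. -/
def antiDer (mul : L →ₗ[K] L →ₗ[K] L) (ρ : L →ₗ[K] Module.End K V) :
    Submodule K (L →ₗ[K] V) where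
  carrier := {D | ∀ x y : L, D (mul x y) = - ρ y (D x) - ρ x (D y)}
  zero_mem' := by intro x y; simp
  add_mem' := by
    intro D E hD hE x y
    simp only [LinearMap.add_apply, hD x y, hE x y, map_add]
    abel
  smul_mem' := by
    intro c D hD x y
    simp only [LinearMap.smul_apply, hD x y, map_smul, smul_sub, smul_neg]

/-- if a mock-Lie algebra `L` (over a field of characteristic `≠ 2, 3`)
has a module `V` and an antiderivation `D : L → V` with `Ker D = 0`, then `L` has a
faithful representation, namely the natural action of `L` on `V ⊕ Der₋₁(L,V)` given
by `ρ` on the first summand and by `x · d = d(x)` on the second. -/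
theorem faithful_rep_of_nondegenerate_antiderivation
    (h2 : (2 : K) ≠ 0) (h3 : (3 : K) ≠ 0)
    (mul : L →ₗ[K] L →ₗ[K] L)
    (comm : ∀ x y : L, mul x y = mul y x)
    (jacobi : ∀ x y z : L, mul (mul x y) z + mul (mul z x) y + mul (mul y z) x = 0)
    (ρ : L →ₗ[K] Module.End K V)
    (hρ : ∀ (x y : L) (v : V), ρ (mul x y) v = - ρ x (ρ y v) - ρ y (ρ x v))
    (D : L →ₗ[K] V)
    (hD : ∀ x y : L, D (mul x y) = - ρ y (D x) - ρ x (D y))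
    (hker : LinearMap.ker D = ⊥) :
    ∃ σ : L →ₗ[K] Module.End K (V × antiDer K mul ρ),
      (∀ (x : L) (v : V) (d : antiDer K mul ρ),
        σ x (v, d) = (ρ x v + (d : L →ₗ[K] V) x, 0)) ∧
      (∀ (x y : L) (p : V × antiDer K mul ρ),
        σ (mul x y) p = - σ x (σ y p) - σ y (σ x p)) ∧
      Function.Injective σ := by
  -- The action is bilinear in `x` and `(v, d)`, so it is built with `LinearMap.mk₂`.
  let σ : L →ₗ[K] Module.End K (V × antiDer K mul ρ) :=
    LinearMap.mk₂ K (fun x p => (ρ x p.1 + (p.2 : L →ₗ[K] V) x, 0))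
      (by intro x y p; ext <;> simp; abel)
      (by intro c x p; ext <;> simp)
      (by intro x p q; ext <;> simp; abel)
      (by intro c x p; ext <;> simp)
  have hσ : ∀ x p, σ x p = (ρ x p.1 + (p.2 : L →ₗ[K] V) x, 0) := fun _ _ => rfl
  refine ⟨σ, fun x v d => hσ x (v, d), ?_, ?_⟩
  · rintro x y ⟨v, d, hd⟩
    have hd' : d (mul x y) = - ρ y (d x) - ρ x (d y) := hd x y
    ext
    · simp only [hσ, hρ, hd', Prod.fst_sub, Prod.fst_neg, map_add, ZeroMemClass.coe_zero,
        LinearMap.zero_apply, add_zero]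
      abel
    · simp [hσ]
  · intro x y hxy
    apply LinearMap.ker_eq_bot.mp hker
    have h := congrArg Prod.fst (LinearMap.congr_fun hxy ((0, ⟨D, hD⟩) : V × antiDer K mul ρ))
    simpa [hσ] using h
end

section
/- Let K be a field of characteristic different from 2 and 3, let n ≥ 2, and let A = tK[t]/(t^n) be the non-unital commutative associative algebra with basis t, t², …, t^{n−1} and obvious multiplication (t^i · t^j = t^{i+j} if i + j ≤ n − 1, and 0 otherwise). Then the vector space of antiderivations of A (linear maps D: A → A with D(ab) = −D(a)b − aD(b)) has dimension 1 if n = 2, dimension 2 if n = 3, and dimension 3 if n ≥ 4. A basis can be chosen among the antiderivations given (on basis elements, listing only nonzero values) by: (i) t ↦ t^{n−1}; (ii) t ↦ −(1/2) t^{n−2}, t² ↦ t^{n−1}, if n ≥ 3; (iii) t ↦ t^{n−3}, t² ↦ −2 t^{n−2}, t³ ↦ t^{n−1}, if n ≥ 4. -/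
/-!
Write `A = tK[t]/(tⁿ)`. As `A` is generated by `t`, an antiderivation `D` is determined by
`f = D t` (`antiDer_ext`): the rule gives `D(t²) = -2tf` and `D(t³) = t²f`. Computing `D(t⁴)` as
`D(t·t³) = -2t³f` and as `D(t²·t²) = 4t³f` yields `6t³f = 0`, so `t³f = 0` since `2` and `3` are
invertible (`cube_mul_eq_zero`). Hence `f` is a combination of `t^(n-1)`, `t^(n-2)`, `t^(n-3)`
(those with positive exponent). Each of these values is realised, up to a nonzero scalar, by one
of the explicit maps `antiD1`, `antiD2`, `antiD3`, which are antiderivations by a check on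
monomials. They are linearly independent because their values at `t` are.
-/

variable (K : Type*) [Field K]

/-- The non-unital commutative associative algebra `tK[t]/(tⁿ)`, modelled on
`Fin (n-1) → K`, where the coordinate of index `i` is the coefficient of `t^(i+1)`:
the multiplication `t^(i+1) · t^(j+1) = t^(i+j+2)` if `i+j+2 ≤ n-1`, and `0` otherwise. -/
noncomputable def polyMul (n : ℕ) :
    (Fin (n - 1) → K) →ₗ[K] (Fin (n - 1) → K) →ₗ[K] (Fin (n - 1) → K) :=
  ∑ i : Fin (n - 1), ∑ j : Fin (n - 1),
    if h : (i : ℕ) + (j : ℕ) + 1 < n - 1 then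
      (LinearMap.proj i).smulRight
        ((LinearMap.proj j).smulRight (Pi.single (⟨(i : ℕ) + (j : ℕ) + 1, h⟩ : Fin (n - 1)) (1 : K)))
    else 0

/-- The antiderivation `t ↦ t^(n-1)` of `tK[t]/(tⁿ)`. -/
noncomputable def antiD1 (n : ℕ) (hn : 2 ≤ n) : (Fin (n - 1) → K) →ₗ[K] (Fin (n - 1) → K) :=
  (LinearMap.proj (⟨0, by omega⟩ : Fin (n - 1))).smulRight
    (Pi.single (⟨n - 2, by omega⟩ : Fin (n - 1)) (1 : K))

/-- The antiderivation `t ↦ -(1/2) t^(n-2)`, `t² ↦ t^(n-1)` of `tK[t]/(tⁿ)`, `n ≥ 3`. -/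
noncomputable def antiD2 (n : ℕ) (hn : 3 ≤ n) : (Fin (n - 1) → K) →ₗ[K] (Fin (n - 1) → K) :=
  (-(1 / 2 : K)) • (LinearMap.proj (⟨0, by omega⟩ : Fin (n - 1))).smulRight
      (Pi.single (⟨n - 3, by omega⟩ : Fin (n - 1)) (1 : K)) +
    (LinearMap.proj (⟨1, by omega⟩ : Fin (n - 1))).smulRight
      (Pi.single (⟨n - 2, by omega⟩ : Fin (n - 1)) (1 : K))

/-- The antiderivation `t ↦ t^(n-3)`, `t² ↦ -2 t^(n-2)`, `t³ ↦ t^(n-1)` of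
`tK[t]/(tⁿ)`, `n ≥ 4`. -/
noncomputable def antiD3 (n : ℕ) (hn : 4 ≤ n) : (Fin (n - 1) → K) →ₗ[K] (Fin (n - 1) → K) :=
  (LinearMap.proj (⟨0, by omega⟩ : Fin (n - 1))).smulRight
      (Pi.single (⟨n - 4, by omega⟩ : Fin (n - 1)) (1 : K)) +
    (-2 : K) • (LinearMap.proj (⟨1, by omega⟩ : Fin (n - 1))).smulRight
      (Pi.single (⟨n - 3, by omega⟩ : Fin (n - 1)) (1 : K)) +
    (LinearMap.proj (⟨2, by omega⟩ : Fin (n - 1))).smulRight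
      (Pi.single (⟨n - 2, by omega⟩ : Fin (n - 1)) (1 : K))

/-- The space of antiderivations of `tK[t]/(tⁿ)`: linear maps `D` with
`D(ab) = -D(a)b - aD(b)`. -/
noncomputable def antiDerSpace (n : ℕ) : Submodule K ((Fin (n - 1) → K) →ₗ[K] (Fin (n - 1) → K)) where
  carrier := {D | ∀ a b : Fin (n - 1) → K,
    D (polyMul K n a b) = - polyMul K n (D a) b - polyMul K n a (D b)}
  zero_mem' := by intro a b; simp
  add_mem' := by
    intro D E hD hE a b
    simp only [LinearMap.add_apply, hD a b, hE a b, map_add, LinearMap.add_apply]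
    abel
  smul_mem' := by
    intro c D hD a b
    simp only [LinearMap.smul_apply, hD a b, map_smul, LinearMap.smul_apply,
      smul_sub, smul_neg]

/-! ### Monomials and multiplication -/

/-- The element `t^(k+1)` of `tK[t]/(tⁿ)` for every natural `k`; it is `0` when `k + 1 ≥ n`, so
that the product rule `polyMul_mon` needs no case distinction. -/
noncomputable def mon (n k : ℕ) : Fin (n - 1) → K :=
  fun j => if (j : ℕ) = k then 1 else 0

variable {K}

lemma mon_eq_single {n : ℕ} (i : Fin (n - 1)) : mon K n i = Pi.single i 1 := by
  ext j
  simp [mon, Pi.single_apply, Fin.ext_iff]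

lemma mon_eq_zero {n k : ℕ} (h : n - 1 ≤ k) : mon K n k = 0 := by
  ext j
  have := j.2
  simp only [mon, Pi.zero_apply, ite_eq_right_iff]
  omega

lemma linearMap_ext_mon {n : ℕ} {M : Type*} [AddCommGroup M] [Module K M]
    {L L' : (Fin (n - 1) → K) →ₗ[K] M} (h : ∀ k, k < n - 1 → L (mon K n k) = L' (mon K n k)) :
    L = L' := by
  refine LinearMap.pi_ext' fun i => LinearMap.ext_ring ?_
  simpa [mon_eq_single] using h i i.2

lemma polyMul_mon (n i j : ℕ) :
    polyMul K n (mon K n i) (mon K n j) = mon K n (i + j + 1) := by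
  by_cases hi : i < n - 1
  · by_cases hj : j < n - 1
    · unfold polyMul
      simp only [LinearMap.sum_apply]
      rw [Finset.sum_eq_single ⟨i, hi⟩, Finset.sum_eq_single ⟨j, hj⟩]
      · split_ifs with h
        · simpa [mon] using (mon_eq_single (K := K) (n := n) ⟨i + j + 1, h⟩).symm
        · simp only [not_lt] at h
          simp [mon_eq_zero h]
      · intro b _ hb
        have : (b : ℕ) ≠ j := fun h => hb (Fin.ext h)
        split_ifs <;> simp [mon, this]
      · simp
      · intro b _ hb
        have : (b : ℕ) ≠ i := fun h => hb (Fin.ext h)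
        refine Finset.sum_eq_zero fun c _ => ?_
        split_ifs <;> simp [mon, this]
      · simp
    · rw [mon_eq_zero (k := j) (by omega), mon_eq_zero (k := i + j + 1) (by omega), map_zero]
  · rw [mon_eq_zero (k := i) (by omega), mon_eq_zero (k := i + j + 1) (by omega), map_zero,
      LinearMap.zero_apply]

lemma polyMul_comm (n : ℕ) (a b : Fin (n - 1) → K) : polyMul K n a b = polyMul K n b a := by
  have : polyMul K n = (polyMul K n).flip := by
    refine linearMap_ext_mon fun i _ => linearMap_ext_mon fun j _ => ?_
    rw [LinearMap.flip_apply, polyMul_mon, polyMul_mon, add_comm i j]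
  exact congrArg (fun L => L a b) this

lemma mon_mul_mon_mul (n i j : ℕ) (f : Fin (n - 1) → K) :
    polyMul K n (mon K n i) (polyMul K n (mon K n j) f) = polyMul K n (mon K n (i + j + 1)) f := by
  have : polyMul K n (mon K n i) ∘ₗ polyMul K n (mon K n j) = polyMul K n (mon K n (i + j + 1)) := by
    refine linearMap_ext_mon fun k _ => ?_
    rw [LinearMap.comp_apply, polyMul_mon, polyMul_mon, polyMul_mon]
    congr 1
    omega
  exact congrArg (fun L => L f) this

/-- Multiplication by `t^(j+1)` shifts coefficients by `j + 1`. -/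
lemma mon_mul_apply (n j i : ℕ) (h : i + j + 1 < n - 1) (f : Fin (n - 1) → K) :
    polyMul K n (mon K n j) f ⟨i + j + 1, h⟩ = f ⟨i, by omega⟩ := by
  have : LinearMap.proj (⟨i + j + 1, h⟩ : Fin (n - 1)) ∘ₗ polyMul K n (mon K n j) =
      (LinearMap.proj (⟨i, by omega⟩ : Fin (n - 1)) : (Fin (n - 1) → K) →ₗ[K] K) := by
    refine linearMap_ext_mon fun k _ => ?_
    rw [LinearMap.comp_apply, polyMul_mon]
    simp only [LinearMap.proj_apply, mon]
    congr 1
    simp only [eq_iff_iff]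
    omega
  exact congrArg (fun L => L f) this

/-! ### Constraints on an antiderivation -/

/-- The antiderivation rule only has to be checked on pairs of monomials. -/
lemma mem_antiDerSpace_of_mon {n : ℕ} {D : (Fin (n - 1) → K) →ₗ[K] (Fin (n - 1) → K)}
    (h : ∀ i j, i < n - 1 → j < n - 1 → D (mon K n (i + j + 1)) =
      - polyMul K n (D (mon K n i)) (mon K n j) - polyMul K n (mon K n i) (D (mon K n j))) :
    D ∈ antiDerSpace K n := by
  have key : (polyMul K n).compr₂ D =
      - (polyMul K n ∘ₗ D) - (polyMul K n).compl₂ D := by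
    refine linearMap_ext_mon fun i hi => linearMap_ext_mon fun j hj => ?_
    simpa [polyMul_mon] using h i j hi hj
  intro a b
  simpa using congrArg (fun L => L a b) key

/-- An antiderivation is determined by its value at `t`, because `t` generates the algebra. -/
lemma antiDer_ext {n : ℕ} {D D' : (Fin (n - 1) → K) →ₗ[K] (Fin (n - 1) → K)}
    (hD : D ∈ antiDerSpace K n) (hD' : D' ∈ antiDerSpace K n)
    (h : D (mon K n 0) = D' (mon K n 0)) : D = D' := by
  refine linearMap_ext_mon fun k _ => ?_
  induction k with
  | zero => exact h
  | succ k ih =>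
    have ih := ih (by omega)
    have e := hD (mon K n k) (mon K n 0)
    have e' := hD' (mon K n k) (mon K n 0)
    rw [polyMul_mon, add_zero] at e e'
    rw [e, e', ih, h]

/-- `t³ · D t = 0`, by comparing the two expansions of `D(t⁴)`. -/
lemma cube_mul_eq_zero (h2 : (2 : K) ≠ 0) (h3 : (3 : K) ≠ 0) {n : ℕ}
    {D : (Fin (n - 1) → K) →ₗ[K] (Fin (n - 1) → K)} (hD : D ∈ antiDerSpace K n) :
    polyMul K n (mon K n 2) (D (mon K n 0)) = 0 := by
  have rule : ∀ i j, D (mon K n (i + j + 1)) =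
      - polyMul K n (mon K n j) (D (mon K n i)) - polyMul K n (mon K n i) (D (mon K n j)) := by
    intro i j
    rw [polyMul_comm n (mon K n j), ← polyMul_mon]
    exact hD _ _
  have d1 := rule 0 0
  have d2 := rule 0 1
  have d3 := rule 0 2
  have d3' := rule 1 1
  norm_num only at d1 d2 d3 d3'
  rw [d1] at d2 d3'
  rw [d2] at d3
  rw [d3] at d3'
  simp only [map_sub, map_neg, mon_mul_mon_mul] at d3'
  norm_num only at d3'
  have h6 : (2 * 3 : K) • polyMul K n (mon K n 2) (D (mon K n 0)) = 0 := by
    refine Eq.trans ?_ (sub_eq_zero.mpr d3'.symm)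
    module
  exact (smul_eq_zero.mp h6).resolve_left (mul_ne_zero h2 h3)

/-- `D t` has no coefficient at `t^(i+1)` when `i + 4 < n`. -/
lemma antiDer_coeff_eq_zero (h2 : (2 : K) ≠ 0) (h3 : (3 : K) ≠ 0) {n : ℕ}
    {D : (Fin (n - 1) → K) →ₗ[K] (Fin (n - 1) → K)} (hD : D ∈ antiDerSpace K n)
    (i : Fin (n - 1)) (hi : (i : ℕ) + 2 + 1 < n - 1) : D (mon K n 0) i = 0 := by
  rw [← mon_mul_apply n 2 i hi (D (mon K n 0)), cube_mul_eq_zero h2 h3 hD, Pi.zero_apply]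

/-! ### The explicit antiderivations -/

lemma antiD1_mon {n : ℕ} (hn : 2 ≤ n) (k : ℕ) :
    antiD1 K n hn (mon K n k) = if k = 0 then mon K n (n - 2) else 0 := by
  have e := mon_eq_single (K := K) (n := n) ⟨n - 2, by omega⟩
  simp only [antiD1, ← e, LinearMap.smulRight_apply, LinearMap.proj_apply, mon, eq_comm (a := 0)]
  split_ifs <;> simp

lemma antiD2_mon {n : ℕ} (hn : 3 ≤ n) (k : ℕ) :
    antiD2 K n hn (mon K n k) = if k = 0 then (-(1 / 2 : K)) • mon K n (n - 3)
      else if k = 1 then mon K n (n - 2) else 0 := by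
  have e := mon_eq_single (K := K) (n := n) ⟨n - 2, by omega⟩
  have e' := mon_eq_single (K := K) (n := n) ⟨n - 3, by omega⟩
  simp only [antiD2, ← e, ← e', LinearMap.add_apply, LinearMap.smul_apply,
    LinearMap.smulRight_apply, LinearMap.proj_apply]
  rcases k with _ | _ | k <;> simp [mon]

lemma antiD3_mon {n : ℕ} (hn : 4 ≤ n) (k : ℕ) :
    antiD3 K n hn (mon K n k) = if k = 0 then mon K n (n - 4)
      else if k = 1 then (-2 : K) • mon K n (n - 3)
      else if k = 2 then mon K n (n - 2) else 0 := by
  have e := mon_eq_single (K := K) (n := n) ⟨n - 2, by omega⟩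
  have e' := mon_eq_single (K := K) (n := n) ⟨n - 3, by omega⟩
  have e'' := mon_eq_single (K := K) (n := n) ⟨n - 4, by omega⟩
  simp only [antiD3, ← e, ← e', ← e'', LinearMap.add_apply, LinearMap.smul_apply,
    LinearMap.smulRight_apply, LinearMap.proj_apply]
  rcases k with _ | _ | _ | k <;> simp [mon]

lemma antiD1_mem {n : ℕ} (hn : 2 ≤ n) : antiD1 K n hn ∈ antiDerSpace K n := by
  refine mem_antiDerSpace_of_mon fun i j _ _ => ?_
  rcases i with _ | i <;> rcases j with _ | j <;> ext c <;> have hc := c.2 <;>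
    simp [antiD1_mon, polyMul_mon, mon] <;> (try split_ifs) <;> first | omega | norm_num

lemma antiD2_mem (h2 : (2 : K) ≠ 0) {n : ℕ} (hn : 3 ≤ n) :
    antiD2 K n hn ∈ antiDerSpace K n := by
  refine mem_antiDerSpace_of_mon fun i j _ _ => ?_
  rcases i with _ | _ | i <;> rcases j with _ | _ | j <;> ext c <;> have hc := c.2 <;>
    simp [antiD2_mon, polyMul_mon, mon] <;> (try split_ifs) <;> first | omega | (field_simp; norm_num)

lemma antiD3_mem {n : ℕ} (hn : 4 ≤ n) : antiD3 K n hn ∈ antiDerSpace K n := by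
  refine mem_antiDerSpace_of_mon fun i j _ _ => ?_
  rcases i with _ | _ | _ | i <;> rcases j with _ | _ | _ | j <;> ext c <;> have hc := c.2 <;>
    simp [antiD3_mon, polyMul_mon, mon] <;> (try split_ifs) <;> first | omega | norm_num

/-! ### Spanning -/

lemma antiDerSpace_two {n : ℕ} (hn : 2 ≤ n) (h : n = 2) :
    antiDerSpace K n = Submodule.span K {antiD1 K n hn} := by
  refine le_antisymm (fun D hD => ?_) (Submodule.span_le.mpr ?_)
  · rw [Submodule.mem_span_singleton]
    refine ⟨D (mon K n 0) ⟨n - 2, by omega⟩, ?_⟩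
    refine antiDer_ext (Submodule.smul_mem _ _ (antiD1_mem hn)) hD ?_
    ext i
    obtain rfl : i = ⟨n - 2, by omega⟩ := Fin.ext (by simp only []; omega)
    simp [antiD1_mon, mon]
  · rintro _ rfl
    exact antiD1_mem hn

lemma antiDerSpace_three (h2 : (2 : K) ≠ 0) {n : ℕ} (h2n : 2 ≤ n) (hn : 3 ≤ n)
    (h : n = 3) : antiDerSpace K n = Submodule.span K {antiD1 K n h2n, antiD2 K n hn} := by
  refine le_antisymm (fun D hD => ?_) (Submodule.span_le.mpr ?_)
  · rw [Submodule.mem_span_pair]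
    -- The factor `-2` compensates for `antiD2 t = -(1/2) t^(n-2)`.
    refine ⟨D (mon K n 0) ⟨n - 2, by omega⟩, -2 * D (mon K n 0) ⟨n - 3, by omega⟩, ?_⟩
    refine antiDer_ext (add_mem (Submodule.smul_mem _ _ (antiD1_mem _))
      (Submodule.smul_mem _ _ (antiD2_mem h2 hn))) hD ?_
    ext i
    have hi : i = ⟨n - 2, by omega⟩ ∨ i = ⟨n - 3, by omega⟩ := by
      simp only [Fin.ext_iff]
      omega
    have h23 : n - 2 ≠ n - 3 := by omega
    rcases hi with rfl | rfl <;> simp [antiD1_mon, antiD2_mon, mon, h23, h23.symm] <;> field_simp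
  · rintro _ (rfl | rfl)
    · exact antiD1_mem _
    · exact antiD2_mem h2 hn

lemma antiDerSpace_four (h2 : (2 : K) ≠ 0) (h3 : (3 : K) ≠ 0) {n : ℕ} (h2n : 2 ≤ n)
    (h3n : 3 ≤ n) (hn : 4 ≤ n) :
    antiDerSpace K n = Submodule.span K {antiD1 K n h2n, antiD2 K n h3n, antiD3 K n hn} := by
  refine le_antisymm (fun D hD => ?_) (Submodule.span_le.mpr ?_)
  · rw [Submodule.mem_span_triple]
    -- The factor `-2` compensates for `antiD2 t = -(1/2) t^(n-2)`.
    refine ⟨D (mon K n 0) ⟨n - 2, by omega⟩, -2 * D (mon K n 0) ⟨n - 3, by omega⟩,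
      D (mon K n 0) ⟨n - 4, by omega⟩, ?_⟩
    refine antiDer_ext (add_mem (add_mem (Submodule.smul_mem _ _ (antiD1_mem _))
      (Submodule.smul_mem _ _ (antiD2_mem h2 _))) (Submodule.smul_mem _ _ (antiD3_mem hn))) hD ?_
    have l2 : n - 2 < n - 1 := by omega
    have l3 : n - 3 < n - 1 := by omega
    have l4 : n - 4 < n - 1 := by omega
    ext i
    have h23 : n - 2 ≠ n - 3 := by omega
    have h24 : n - 2 ≠ n - 4 := by omega
    have h34 : n - 3 ≠ n - 4 := by omega
    by_cases hi : (i : ℕ) + 2 + 1 < n - 1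
    · rw [antiDer_coeff_eq_zero h2 h3 hD i hi]
      have i2 : (i : ℕ) ≠ n - 2 := by omega
      have i3 : (i : ℕ) ≠ n - 3 := by omega
      have i4 : (i : ℕ) ≠ n - 4 := by omega
      simp [antiD1_mon, antiD2_mon, antiD3_mon, mon, i2, i3, i4]
    · have hi : i = ⟨n - 2, l2⟩ ∨ i = ⟨n - 3, l3⟩ ∨ i = ⟨n - 4, l4⟩ := by
        simp only [Fin.ext_iff]
        omega
      rcases hi with rfl | rfl | rfl <;>
        simp [antiD1_mon, antiD2_mon, antiD3_mon, mon, h23, h24, h34, h23.symm, h24.symm,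
          h34.symm] <;> field_simp
  · rintro _ (rfl | rfl | rfl)
    · exact antiD1_mem _
    · exact antiD2_mem h2 _
    · exact antiD3_mem hn

/-! ### Linear independence and dimension -/

lemma linearIndependent_antiD1 {n : ℕ} (hn : 2 ≤ n) :
    LinearIndependent K ![antiD1 K n hn] := by
  rw [Fintype.linearIndependent_iff]
  intro g hg
  have e := congrArg (fun L => L (mon K n 0) ⟨n - 2, by omega⟩) hg
  simp [antiD1_mon, mon] at e
  intro i
  fin_cases i
  exact e

lemma linearIndependent_antiD12 (h2 : (2 : K) ≠ 0) {n : ℕ} (h2n : 2 ≤ n) (hn : 3 ≤ n) :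
    LinearIndependent K ![antiD1 K n h2n, antiD2 K n hn] := by
  rw [Fintype.linearIndependent_iff]
  intro g hg
  have h23 : n - 2 ≠ n - 3 := by omega
  have e1 := congrArg (fun L => L (mon K n 0) ⟨n - 2, by omega⟩) hg
  have e2 := congrArg (fun L => L (mon K n 0) ⟨n - 3, by omega⟩) hg
  simp [Fin.sum_univ_succ, antiD1_mon, antiD2_mon, mon, h23, h23.symm, h2] at e1 e2
  intro i
  fin_cases i
  · exact e1
  · exact e2

lemma linearIndependent_antiD123 (h2 : (2 : K) ≠ 0) {n : ℕ} (h2n : 2 ≤ n)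
    (h3n : 3 ≤ n) (hn : 4 ≤ n) :
    LinearIndependent K ![antiD1 K n h2n, antiD2 K n h3n, antiD3 K n hn] := by
  rw [Fintype.linearIndependent_iff]
  intro g hg
  have h23 : n - 2 ≠ n - 3 := by omega
  have h24 : n - 2 ≠ n - 4 := by omega
  have h34 : n - 3 ≠ n - 4 := by omega
  have e1 := congrArg (fun L => L (mon K n 0) ⟨n - 2, by omega⟩) hg
  have e2 := congrArg (fun L => L (mon K n 0) ⟨n - 3, by omega⟩) hg
  have e3 := congrArg (fun L => L (mon K n 0) ⟨n - 4, by omega⟩) hg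
  simp [Fin.sum_univ_succ, antiD1_mon, antiD2_mon, antiD3_mon, mon, h23, h24, h34, h23.symm,
    h24.symm, h34.symm, h2] at e1 e2 e3
  intro i
  fin_cases i
  · exact e1
  · exact e2
  · exact e3

variable (K)

/-- the space of antiderivations of `tK[t]/(tⁿ)` (over a field of
characteristic `≠ 2, 3`, `n ≥ 2`) has dimension `1` for `n = 2`, `2` for `n = 3`,
`3` for `n ≥ 4`, and a basis can be chosen among the explicit antiderivations
`antiD1`, `antiD2`, `antiD3`. -/
theorem antiDer_truncated_poly (h2 : (2 : K) ≠ 0) (h3 : (3 : K) ≠ 0)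
    (n : ℕ) (hn : 2 ≤ n) :
    (Module.finrank K (antiDerSpace K n) =
      if n = 2 then 1 else if n = 3 then 2 else 3) ∧
    (n = 2 → antiDerSpace K n = Submodule.span K {antiD1 K n hn}) ∧
    (∀ h3n : n = 3, antiDerSpace K n =
      Submodule.span K {antiD1 K n hn, antiD2 K n (by omega)}) ∧
    (∀ h4n : 4 ≤ n, antiDerSpace K n =
      Submodule.span K {antiD1 K n hn, antiD2 K n (by omega), antiD3 K n h4n}) := by
  refine ⟨?_, antiDerSpace_two hn, fun h => antiDerSpace_three h2 hn (by omega) h,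
    fun h => antiDerSpace_four h2 h3 hn (by omega) h⟩
  split_ifs with hn2 hn3
  · rw [antiDerSpace_two hn hn2,
      show ({antiD1 K n hn} : Set _) = Set.range ![antiD1 K n hn] by simp]
    exact finrank_span_eq_card (linearIndependent_antiD1 hn)
  · have h3n : 3 ≤ n := by omega
    rw [antiDerSpace_three h2 hn h3n hn3,
      show ({antiD1 K n hn, antiD2 K n h3n} : Set _) =
        Set.range ![antiD1 K n hn, antiD2 K n h3n] by
        simp only [Matrix.range_cons, Matrix.range_empty, Set.union_empty, Set.singleton_union]]
    exact finrank_span_eq_card (linearIndependent_antiD12 h2 hn h3n)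
  · have h3n : 3 ≤ n := by omega
    have h4n : 4 ≤ n := by omega
    rw [antiDerSpace_four h2 h3 hn h3n h4n,
      show ({antiD1 K n hn, antiD2 K n h3n, antiD3 K n h4n} : Set _) =
        Set.range ![antiD1 K n hn, antiD2 K n h3n, antiD3 K n h4n] by
        simp only [Matrix.range_cons, Matrix.range_empty, Set.union_empty, Set.singleton_union]]
    exact finrank_span_eq_card (linearIndependent_antiD123 h2 hn h3n h4n)
end

section
/- Let K be a field of characteristic different from 2 and 3, and let L be a mock-Lie algebra over K graded by degrees 1, 2, 3: L = L₁ ⊕ L₂ ⊕ L₃ with Lᵢ ∘ Lⱼ ⊆ L_{i+j} (where L_m = 0 for m ≥ 4). Then L has a faithful representation: there is a K-vector space V and an injective linear map ρ: L → End(V) with ρ(x∘y)v = −ρ(x)(ρ(y)v) − ρ(y)(ρ(x)v) for all x, y ∈ L and v ∈ V. -/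
/-!
Up to sign, a representation of `L` is a linear map `σ` into an associative algebra with
`σ (x ∘ y) = σ x σ y + σ y σ x`, so the claim is that `L = L₁ ⊕ L₂ ⊕ L₃` is a special Jordan algebra.

A graded module `V = K ⊕ V₁ ⊕ V₂ ⊕ V₃` is built on which `x` sends `1 ∈ K` to a vector whose
coordinates include all the homogeneous components of `x`; injectivity is then immediate. Besides
a copy of `L`, the space `V₂` holds linear maps `f`, which record how a degree-one element `u` will
act, `u · f = f u ∈ V₃`. In degree three one needs values for the products `a d`, `d a` and
`a b c` with `a, b, c ∈ L₁`, `d ∈ L₂`. Taking `a d = d a = ½ a ∘ d`, the remaining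
conditions are `t(a, b, c) + t(b, a, c) = ½ (a ∘ b) ∘ c = t(c, a, b) + t(c, b, a)`
for the triple product `t`, and by the Jacobi identity they hold for
`t(a, b, c) = -½ (c ∘ a) ∘ b`.
-/

universe u v

variable (K : Type u) [Field K] {L : Type v} [AddCommGroup L] [Module K L]

/-- A witness that the mock-Lie algebra `(L, mul)` has a faithful representation:
a `K`-vector space `V` and an injective linear map `ρ : L → End(V)` with
`ρ(x∘y)v = -ρ(x)(ρ(y)v) - ρ(y)(ρ(x)v)`. -/
structure FaithfulRep (mul : L →ₗ[K] L →ₗ[K] L) : Type (max u v + 1) where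
  V : Type (max u v)
  [addV : AddCommGroup V]
  [modV : Module K V]
  ρ : L →ₗ[K] Module.End K V
  rep : ∀ (x y : L) (v : V), ρ (mul x y) v = - ρ x (ρ y v) - ρ y (ρ x v)
  inj : Function.Injective ρ

section

variable {K}

/-- The operator `σ x` on `K × L × L × (L →ₗ L) × L`, whose factors are `V₀ = K`, `V₁ = L`,
`V₂ = L × (L →ₗ L)` and `V₃ = L`. The maps `P₁ P₂ P₃` play the role of the projections onto
the homogeneous components; `V₁` and `V₃` are taken to be all of `L` to avoid subtypes. -/
def mockAct (mul : L →ₗ[K] L →ₗ[K] L) (P₁ P₂ P₃ : L →ₗ[K] L) :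
    L →ₗ[K] Module.End K (K × L × L × (L →ₗ[K] L) × L) :=
  LinearMap.mk₂ K
    (fun x w =>
      (0, w.1 • P₁ x,
        (2⁻¹ : K) • mul (P₁ x) w.2.1 + w.1 • P₂ x,
        (2⁻¹ : K) • (w.1 • (mul (P₂ x) ∘ₗ P₁)
          - mul.flip (P₁ x) ∘ₗ mul (P₁ w.2.1) ∘ₗ P₁),
        w.2.2.2.1 (P₁ x) + (2⁻¹ : K) • mul (P₂ x) (P₁ w.2.1) + w.1 • P₃ x))
    (by
      intro x y w
      ext <;> simp <;> module)
    (by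
      intro c x w
      ext <;> simp <;> module)
    (by
      intro x w w'
      ext <;> simp <;> module)
    (by
      intro c x w
      ext <;> simp <;> module)

/-- The Jordan form of the representation identity, for maps `P₁ P₂ P₃` that satisfy the
multiplication rules of the projections onto the homogeneous components. -/
lemma mockAct_mul (h2 : (2 : K) ≠ 0) (mul : L →ₗ[K] L →ₗ[K] L)
    (comm : ∀ x y : L, mul x y = mul y x)
    (jacobi : ∀ x y z : L, mul (mul x y) z + mul (mul z x) y + mul (mul y z) x = 0)
    (P₁ P₂ P₃ : L →ₗ[K] L) (h11 : ∀ x, P₁ (P₁ x) = P₁ x)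
    (m1 : ∀ x y, P₁ (mul x y) = 0) (m2 : ∀ x y, P₂ (mul x y) = mul (P₁ x) (P₁ y))
    (m3 : ∀ x y, P₃ (mul x y) = mul (P₁ x) (P₂ y) + mul (P₂ x) (P₁ y))
    (x y : L) (w : K × L × L × (L →ₗ[K] L) × L) :
    mockAct mul P₁ P₂ P₃ (mul x y) w =
      mockAct mul P₁ P₂ P₃ x (mockAct mul P₁ P₂ P₃ y w) +
        mockAct mul P₁ P₂ P₃ y (mockAct mul P₁ P₂ P₃ x w) := by
  obtain ⟨k, v, b, f, z⟩ := w
  have half : ∀ a : L, a = (2⁻¹ : K) • a + (2⁻¹ : K) • a := fun a => by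
    rw [← add_smul, ← two_mul, mul_inv_cancel₀ h2, one_smul]
  simp only [mockAct, LinearMap.mk₂_apply, Prod.mk_add_mk, Prod.mk.injEq, m1, m2, m3, h11, map_smul,
    map_zero, LinearMap.zero_apply, zero_smul, smul_zero, add_zero, zero_add, true_and]
  refine ⟨?_, ?_, ?_⟩
  · rw [comm (P₁ y) (P₁ x), smul_comm _ k, ← smul_add, ← half]
  · ext u
    have j := jacobi (P₁ x) (P₁ y) (P₁ u)
    rw [comm (P₁ u) (P₁ x), add_assoc, add_eq_zero_iff_eq_neg] at j
    simp [j]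
  · have j := jacobi (P₁ x) (P₁ y) (P₁ v)
    rw [comm (P₁ y) (P₁ v), add_assoc, add_eq_zero_iff_eq_neg] at j
    simp [h11, j]
    rw [comm (P₁ x) (P₂ y)]
    linear_combination (norm := module) k • half (mul (P₂ y) (P₁ x)) +
      k • half (mul (P₂ x) (P₁ y))

end

/-- In degrees `1, 2, 3` the components of `x ∘ y` are `0`, `x₁ ∘ y₁` and
`x₁ ∘ y₂ + x₂ ∘ y₁`. -/
lemma exists_homogeneous_projections
    (mul : L →ₗ[K] L →ₗ[K] L) (G : ℕ → Submodule K L)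
    (hinternal : DirectSum.IsInternal G)
    (hG0 : G 0 = ⊥) (hGtop : ∀ m, 4 ≤ m → G m = ⊥)
    (hgraded : ∀ i j, ∀ x ∈ G i, ∀ y ∈ G j, mul x y ∈ G (i + j)) :
    ∃ P₁ P₂ P₃ : L →ₗ[K] L, (∀ x, x = P₁ x + P₂ x + P₃ x) ∧ (∀ x, P₁ (P₁ x) = P₁ x) ∧
      (∀ x y, P₁ (mul x y) = 0) ∧ (∀ x y, P₂ (mul x y) = mul (P₁ x) (P₁ y)) ∧
      (∀ x y, P₃ (mul x y) = mul (P₁ x) (P₂ y) + mul (P₂ x) (P₁ y)) := by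
  classical
  let _ := hinternal.chooseDecomposition
  let P : ℕ → L →ₗ[K] L := fun i =>
    (G i).subtype ∘ₗ DirectSum.component K ℕ (fun i => G i) i ∘ₗ
      (DirectSum.decomposeLinearEquiv G).toLinearMap
  have hP : ∀ i x, P i x = (DirectSum.decompose G x i : L) := fun i x => rfl
  have mem : ∀ i x, P i x ∈ G i := fun i x => (DirectSum.decompose G x i).2
  have same : ∀ {i x}, x ∈ G i → P i x = x := fun hx => by
    rw [hP, DirectSum.decompose_of_mem_same G hx]
  have ne : ∀ {i j x}, x ∈ G i → i ≠ j → P j x = 0 := fun hx h => by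
    rw [hP, DirectSum.decompose_of_mem_ne G hx h]
  have sum : ∀ x, x = P 1 x + P 2 x + P 3 x := by
    intro x
    have hs : (DirectSum.decompose G x).support ⊆ ({1, 2, 3} : Finset ℕ) := by
      intro i hi
      by_contra hn
      have hb : G i = ⊥ := by
        rcases Nat.eq_zero_or_pos i with rfl | h
        · exact hG0
        · refine hGtop i ?_
          simp at hn
          omega
      have h0 : P i x = 0 := (Submodule.mem_bot K).1 (hb ▸ mem i x)
      rw [DFinsupp.mem_support_iff] at hi
      exact hi (Subtype.ext h0)
    conv_lhs => rw [← DirectSum.sum_support_decompose G x]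
    rw [Finset.sum_subset hs]
    · simp [hP, add_assoc]
    · intro i _ hi
      rw [DFinsupp.notMem_support_iff] at hi
      simp [hi]
  have big : ∀ i j x y, 4 ≤ i + j → mul (P i x) (P j y) = 0 := fun i j x y h =>
    (Submodule.mem_bot K).1 (hGtop _ h ▸ hgraded i j _ (mem i x) _ (mem j y))
  have key : ∀ x y, mul x y =
      mul (P 1 x) (P 1 y) + (mul (P 1 x) (P 2 y) + mul (P 2 x) (P 1 y)) := by
    intro x y
    conv_lhs => rw [sum x, sum y]
    simp only [map_add, LinearMap.add_apply, big 1 3 x y (by norm_num), big 2 2 x y (by norm_num),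
      big 2 3 x y (by norm_num), big 3 1 x y (by norm_num), big 3 2 x y (by norm_num),
      big 3 3 x y (by norm_num)]
    abel
  have d2 : ∀ x y, mul (P 1 x) (P 1 y) ∈ G 2 := fun x y => hgraded 1 1 _ (mem 1 x) _ (mem 1 y)
  have d3 : ∀ x y, mul (P 1 x) (P 2 y) + mul (P 2 x) (P 1 y) ∈ G 3 := fun x y =>
    add_mem (hgraded 1 2 _ (mem 1 x) _ (mem 2 y)) (hgraded 2 1 _ (mem 2 x) _ (mem 1 y))
  refine ⟨P 1, P 2, P 3, sum, fun x => same (mem 1 x), fun x y => ?_, fun x y => ?_,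
    fun x y => ?_⟩
  · rw [key, map_add, ne (d2 x y) (by norm_num), ne (d3 x y) (by norm_num), add_zero]
  · rw [key, map_add, same (d2 x y), ne (d3 x y) (by norm_num), add_zero]
  · rw [key, map_add, ne (d2 x y) (by norm_num), same (d3 x y), zero_add]

/-- a mock-Lie algebra over a field of characteristic `≠ 2, 3` graded by
degrees `1, 2, 3` (`L = L₁ ⊕ L₂ ⊕ L₃`, `Lᵢ ∘ Lⱼ ⊆ L_{i+j}`, `L_m = 0` for `m ≥ 4`)
has a faithful representation. -/
theorem graded_by_three_has_faithful_rep (h2 : (2 : K) ≠ 0) (h3 : (3 : K) ≠ 0)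
    (mul : L →ₗ[K] L →ₗ[K] L)
    (comm : ∀ x y : L, mul x y = mul y x)
    (jacobi : ∀ x y z : L, mul (mul x y) z + mul (mul z x) y + mul (mul y z) x = 0)
    (G : ℕ → Submodule K L)
    (hinternal : DirectSum.IsInternal G)
    (hG0 : G 0 = ⊥) (hGtop : ∀ m, 4 ≤ m → G m = ⊥)
    (hgraded : ∀ i j, ∀ x ∈ G i, ∀ y ∈ G j, mul x y ∈ G (i + j)) :
    Nonempty (FaithfulRep K mul) := by
  obtain ⟨P₁, P₂, P₃, sum, h11, m1, m2, m3⟩ :=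
    exists_homogeneous_projections K mul G hinternal hG0 hGtop hgraded
  refine ⟨{ V := K × L × L × (L →ₗ[K] L) × L, ρ := -mockAct mul P₁ P₂ P₃, rep := ?_, inj := ?_ }⟩
  · intro x y w
    simp only [LinearMap.neg_apply, map_neg, neg_neg,
      mockAct_mul h2 mul comm jacobi P₁ P₂ P₃ h11 m1 m2 m3 x y w]
    abel
  · rw [injective_iff_map_eq_zero]
    intro x hx
    -- The image of `1 ∈ V₀` shows each component of `x` in a separate coordinate.
    have h := LinearMap.congr_fun hx (1, 0, 0, 0, 0)
    simp [mockAct] at h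
    rw [sum x, h.1, h.2.1, h.2.2.2]
    simp
end
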